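/- arXiv:1703.02444 — 8 statements merged into one kernel-verified Lean document; each statement's English description precedes it below -/
import Mathlib

section
/- Let G = (V,E) be a finite simple graph with n vertices and m edges, and set d = n+m. Then the d-dimensional Lebesgue volume of Q(G) equals the volume of O(G) divided by 2^m, and hence vol(Q(G)) = e(G)/(2^m * d!), where e(G) is the number of linear extensions of the incidence poset of G. -/
open MeasureTheory Filter

noncomputable section

/-- The standard relaxation `Q(G)` of the boolean quadric polytope of a graph `G`:
the set of points of `[0,1]^(V + E)` satisfying, for each edge `(i,j)`,
`0 ≤ y_{ij}`, `y_{ij} ≤ x_i`, `y_{ij} ≤ x_j` and `x_i + x_j ≤ 1 + y_{ij}`. -/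
def QSet {V : Type*} (G : SimpleGraph V) : Set ((V → ℝ) × (↥G.edgeSet → ℝ)) :=
  {p | (∀ i, p.1 i ∈ Set.Icc (0 : ℝ) 1) ∧ (∀ e, p.2 e ∈ Set.Icc (0 : ℝ) 1) ∧
    ∀ (i j : V) (h : G.Adj i j),
      0 ≤ p.2 ⟨s(i, j), (SimpleGraph.mem_edgeSet _).mpr h⟩ ∧
      p.2 ⟨s(i, j), (SimpleGraph.mem_edgeSet _).mpr h⟩ ≤ p.1 i ∧
      p.2 ⟨s(i, j), (SimpleGraph.mem_edgeSet _).mpr h⟩ ≤ p.1 j ∧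
      p.1 i + p.1 j ≤ 1 + p.2 ⟨s(i, j), (SimpleGraph.mem_edgeSet _).mpr h⟩}

/-- The order polytope `O(G)` of a graph `G`: the set of points of `[0,1]^(V + E)`
satisfying `y_{ij} ≤ x_i` and `y_{ij} ≤ x_j` for each edge `(i,j)`. -/
def OSet {V : Type*} (G : SimpleGraph V) : Set ((V → ℝ) × (↥G.edgeSet → ℝ)) :=
  {p | (∀ i, p.1 i ∈ Set.Icc (0 : ℝ) 1) ∧ (∀ e, p.2 e ∈ Set.Icc (0 : ℝ) 1) ∧
    ∀ (e : G.edgeSet) (i : V), i ∈ (e : Sym2 V) → p.2 e ≤ p.1 i}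

/-- The number of linear extensions of the incidence poset of `G`: the number of
bijections from `V ⊕ E` to the chain `{1, …, |V| + |E|}` sending `y_{ij}` below
`x_i` and `x_j` for every edge `(i,j)`. -/
def incLinExt {V : Type*} [Fintype V] (G : SimpleGraph V) [Fintype G.edgeSet] : ℕ :=
  Nat.card {f : (V ⊕ G.edgeSet) ≃ Fin (Fintype.card V + Fintype.card G.edgeSet) //
    ∀ (e : G.edgeSet) (i : V), i ∈ (e : Sym2 V) → f (Sum.inr e) < f (Sum.inl i)}


lemma tent_map : (volume.restrict (Set.Icc (0:ℝ) 1)).map (fun x => min x (1-x)) =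
    (volume.restrict (Set.Icc (0:ℝ) 1)).map (fun x => x/2) := by
  apply Measure.ext_of_Iic
  intro a
  rw [Measure.map_apply (by fun_prop) measurableSet_Iic,
    Measure.map_apply (by fun_prop) measurableSet_Iic,
    Measure.restrict_apply (measurableSet_Iic.preimage (by fun_prop)),
    Measure.restrict_apply (measurableSet_Iic.preimage (by fun_prop))]
  rcases lt_or_ge a 0 with h0 | h0
  · congr 1
    ext x
    simp only [Set.mem_inter_iff, Set.mem_preimage, Set.mem_Iic, Set.mem_Icc, min_le_iff]
    grind
  rcases le_or_gt (1/2) a with h1 | h1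
  · congr 1
    ext x
    simp only [Set.mem_inter_iff, Set.mem_preimage, Set.mem_Iic, Set.mem_Icc, min_le_iff]
    grind
  have e1 : (fun x : ℝ => min x (1-x)) ⁻¹' Set.Iic a ∩ Set.Icc 0 1 = Set.Icc 0 a ∪ Set.Icc (1-a) 1 := by
    ext x
    simp only [Set.mem_inter_iff, Set.mem_preimage, Set.mem_Iic, Set.mem_Icc, min_le_iff, Set.mem_union]
    grind
  have e2 : (fun x : ℝ => x/2) ⁻¹' Set.Iic a ∩ Set.Icc 0 1 = Set.Icc 0 (2*a) := by
    ext x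
    simp only [Set.mem_inter_iff, Set.mem_preimage, Set.mem_Iic, Set.mem_Icc]
    grind
  rw [e1, e2, measure_union _ measurableSet_Icc]
  · simp only [Real.volume_Icc]
    rw [← ENNReal.ofReal_add (by linarith) (by linarith)]
    congr 1; ring
  · rw [Set.disjoint_left]
    intro x
    simp only [Set.mem_Icc]
    grind

/-- minimum over the endpoints of an edge -/
def mE {V : Type*} (x : V → ℝ) (e : Sym2 V) : ℝ :=
  Sym2.lift ⟨fun i j => min (x i) (x j), fun i j => min_comm _ _⟩ e

lemma mE_meas {V : Type*} [Fintype V] (e : Sym2 V) : Measurable (fun x : V → ℝ => mE x e) := by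
  induction e with | _ i j => 
  simp only [mE, Sym2.lift_mk]
  fun_prop

lemma le_mE {V : Type*} (x : V → ℝ) (e : Sym2 V) (c : ℝ) : c ≤ mE x e ↔ ∀ i ∈ e, c ≤ x i := by
  induction e with | _ i j => 
  simp [mE, Sym2.lift_mk]

lemma mE_half {V : Type*} (x : V → ℝ) (e : Sym2 V) : mE (fun i => x i / 2) e = mE x e / 2 := by
  induction e with | _ i j => 
  simp only [mE, Sym2.lift_mk]
  grind

def cube (V : Type*) : Set (V → ℝ) := Set.univ.pi fun _ => Set.Icc (0:ℝ) 1

lemma meas_cube (V : Type*) [Fintype V] : MeasurableSet (cube V) :=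
  MeasurableSet.univ_pi fun _ => measurableSet_Icc

lemma volO {V : Type*} [Fintype V] (G : SimpleGraph V) [Fintype G.edgeSet] :
    volume (OSet G) = ∫⁻ x in cube V, ∏ e : G.edgeSet, ENNReal.ofReal (mE x e) := by
  have hcl : MeasurableSet (OSet G) := by
    apply IsClosed.measurableSet
    simp only [OSet, Set.ofPred_and, Set.ofPred_forall, Set.mem_Icc]
    refine IsClosed.inter (isClosed_iInter fun i => ?_) (IsClosed.inter (isClosed_iInter fun i => ?_) 
      (isClosed_iInter fun i => isClosed_iInter fun i => isClosed_iInter fun i => ?_))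
    · exact (isClosed_le (by fun_prop) (by fun_prop)).inter (isClosed_le (by fun_prop) (by fun_prop))
    · exact (isClosed_le (by fun_prop) (by fun_prop)).inter (isClosed_le (by fun_prop) (by fun_prop))
    · exact (isClosed_le (by fun_prop) (by fun_prop))
  rw [Measure.volume_eq_prod, Measure.prod_apply hcl, ← lintegral_indicator
    (meas_cube V)]
  congr 1
  ext x
  by_cases hx : x ∈ cube V
  · rw [Set.indicator_of_mem hx]
    have : Prod.mk x ⁻¹' OSet G = Set.univ.pi fun e : G.edgeSet => Set.Icc 0 (mE x e) := by
      ext y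
      simp only [cube, Set.mem_pi, Set.mem_univ, true_imp_iff] at hx
      simp only [OSet, Set.mem_preimage, Set.mem_ofPred_eq, Set.mem_pi, Set.mem_univ, true_imp_iff,
        Set.mem_Icc, le_mE]
      constructor
      · rintro ⟨_, h2, h3⟩ e
        exact ⟨(h2 e).1, h3 e⟩
      · intro h
        refine ⟨hx, fun e => ⟨(h e).1, ?_⟩, fun e => (h e).2⟩
        obtain ⟨e, he⟩ := e
        induction e with | _ i j => 
        exact ((h _).2 i (by simp)).trans (hx i).2
    rw [this, volume_pi_pi]
    simp
  · rw [Set.indicator_of_notMem hx]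
    convert measure_empty (μ := volume)
    rw [Set.eq_empty_iff_forall_notMem]
    intro y hy
    exact hx fun i _ => hy.1 i

lemma volQ {V : Type*} [Fintype V] (G : SimpleGraph V) [Fintype G.edgeSet] :
    volume (QSet G) = ∫⁻ x in cube V, ∏ e : G.edgeSet,
      ENNReal.ofReal (mE (fun i => min (x i) (1 - x i)) e) := by
  have hcl : MeasurableSet (QSet G) := by
    apply IsClosed.measurableSet
    simp only [QSet, Set.ofPred_and, Set.ofPred_forall, Set.mem_Icc]
    refine IsClosed.inter (isClosed_iInter fun i => ?_) (IsClosed.inter (isClosed_iInter fun i => ?_) 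
      (isClosed_iInter fun i => isClosed_iInter fun i => isClosed_iInter fun i => ?_))
    · exact (isClosed_le (by fun_prop) (by fun_prop)).inter (isClosed_le (by fun_prop) (by fun_prop))
    · exact (isClosed_le (by fun_prop) (by fun_prop)).inter (isClosed_le (by fun_prop) (by fun_prop))
    · exact (isClosed_le (by fun_prop) (by fun_prop)).inter ((isClosed_le (by fun_prop) (by fun_prop)).inter 
       ((isClosed_le (by fun_prop) (by fun_prop)).inter (isClosed_le (by fun_prop) (by fun_prop))))
  rw [Measure.volume_eq_prod, Measure.prod_apply hcl, ← lintegral_indicator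
    (meas_cube V)]
  congr 1
  ext x
  by_cases hx : x ∈ cube V
  · rw [Set.indicator_of_mem hx]
    have : Prod.mk x ⁻¹' QSet G = Set.univ.pi fun e : G.edgeSet =>
        Set.Icc (mE x e - mE (fun i => min (x i) (1 - x i)) e) (mE x e) := by
      ext y
      simp only [cube, Set.mem_pi, Set.mem_univ, true_imp_iff] at hx
      simp only [QSet, Set.mem_preimage, Set.mem_ofPred_eq, Set.mem_pi, Set.mem_univ, true_imp_iff]
      constructor
      · rintro ⟨_, h2, h3⟩ ⟨e, he⟩
        induction e with | _ i j => 
        have := h3 i j he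
        simp only [mE, Sym2.lift_mk, Set.mem_Icc]
        grind
      · intro h
        have key : ∀ (i j : V) (h : G.Adj i j),
          0 ≤ y ⟨s(i, j), (SimpleGraph.mem_edgeSet _).mpr h⟩ ∧
          y ⟨s(i, j), (SimpleGraph.mem_edgeSet _).mpr h⟩ ≤ x i ∧
          y ⟨s(i, j), (SimpleGraph.mem_edgeSet _).mpr h⟩ ≤ x j ∧
          x i + x j ≤ 1 + y ⟨s(i, j), (SimpleGraph.mem_edgeSet _).mpr h⟩ := by
          intro i j hij
          have h1 := h ⟨s(i, j), (SimpleGraph.mem_edgeSet _).mpr hij⟩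
          have hi := hx i
          have hj := hx j
          simp only [mE, Sym2.lift_mk, Set.mem_Icc] at h1 hi hj
          grind
        refine ⟨hx, ?_, key⟩
        rintro ⟨e, he⟩
        induction e with | _ i j => 
        have := key i j he
        exact ⟨this.1, this.2.1.trans (hx i).2⟩
    rw [this, volume_pi_pi]
    simp
  · rw [Set.indicator_of_notMem hx]
    convert measure_empty (μ := volume)
    rw [Set.eq_empty_iff_forall_notMem]
    intro y hy
    exact hx fun i _ => hy.1 i

lemma part1 {V : Type*} [Fintype V] (G : SimpleGraph V) [Fintype G.edgeSet] :
    volume (QSet G) = volume (OSet G) / 2 ^ (Fintype.card G.edgeSet) := by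
  have hm : Measurable fun t : V → ℝ => ∏ e : G.edgeSet, ENNReal.ofReal (mE t e) :=
    Finset.measurable_prod _ fun e _ => (mE_meas _).ennreal_ofReal
  have hr : (volume : Measure (V → ℝ)).restrict (cube V) =
      Measure.pi fun _ => volume.restrict (Set.Icc (0:ℝ) 1) := by
    rw [cube, volume_pi, Measure.restrict_pi_pi]
  have h1 : ((volume : Measure (V → ℝ)).restrict (cube V)).map (fun x i => min (x i) (1 - x i)) =
      ((volume : Measure (V → ℝ)).restrict (cube V)).map (fun x i => x i / 2) := by
    rw [hr]
    have a := Measure.pi_map_pi (μ := fun _ : V => volume.restrict (Set.Icc (0:ℝ) 1))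
      (f := fun _ x => min x (1 - x)) (fun _ => by fun_prop)
    have b := Measure.pi_map_pi (μ := fun _ : V => volume.restrict (Set.Icc (0:ℝ) 1))
      (f := fun _ x => x / 2) (fun _ => by fun_prop)
    rw [tent_map] at a
    exact a.trans b.symm
  rw [volQ, volO, ← lintegral_map (f := fun t : V → ℝ => ∏ e : G.edgeSet, ENNReal.ofReal (mE t e)) hm
    (by fun_prop), h1, lintegral_map hm (by fun_prop), div_eq_mul_inv, ← lintegral_mul_const _ hm]
  congr 1
  ext x
  simp only [mE_half]
  rw [ENNReal.inv_pow, ← Finset.card_univ, ← Finset.prod_const, ← Finset.prod_mul_distrib]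
  congr 1
  ext e
  rw [ENNReal.ofReal_div_of_pos (by norm_num), div_eq_mul_inv]
  simp

/-- standard open chain simplex in the cube -/
def stdChain (d : ℕ) : Set (Fin d → ℝ) := {z | (∀ i, z i ∈ Set.Icc (0:ℝ) 1) ∧ StrictMono z}

def chainSet {ι : Type*} {d : ℕ} (f : ι ≃ Fin d) : Set (ι → ℝ) :=
  {z | (∀ i, z i ∈ Set.Icc (0:ℝ) 1) ∧ StrictMono (z ∘ f.symm)}

lemma meas_stdChain (d : ℕ) : MeasurableSet (stdChain d) := by
  simp only [stdChain, StrictMono, Set.ofPred_and, Set.ofPred_forall, Set.mem_Icc]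
  refine MeasurableSet.inter (MeasurableSet.iInter fun i => ?_)
    (MeasurableSet.iInter fun i => MeasurableSet.iInter fun j => MeasurableSet.iInter fun h => ?_)
  · exact (measurableSet_le (by fun_prop) (by fun_prop)).inter
      (measurableSet_le (by fun_prop) (by fun_prop))
  · exact measurableSet_lt (by fun_prop) (by fun_prop)

lemma chainSet_eq {ι : Type*} {d : ℕ} (f : ι ≃ Fin d) :
    chainSet f = (MeasurableEquiv.piCongrLeft (fun _ => ℝ) f) ⁻¹' stdChain d := by
  ext z
  have : MeasurableEquiv.piCongrLeft (fun _ => ℝ) f z = z ∘ f.symm := by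
    ext i
    obtain ⟨i, rfl⟩ := f.surjective i
    rw [MeasurableEquiv.piCongrLeft_apply_apply]
    simp
  simp only [chainSet, stdChain, Set.mem_preimage, this, Set.mem_ofPred_eq, Function.comp_apply]
  refine and_congr_left fun _ => ⟨fun h i => h _, fun h i => ?_⟩
  simpa using h (f i)

lemma meas_chainSet {ι : Type*} {d : ℕ} (f : ι ≃ Fin d) : MeasurableSet (chainSet f) := by
  rw [chainSet_eq]
  exact (MeasurableEquiv.measurable _) (meas_stdChain d)

lemma vol_chainSet {ι : Type*} [Fintype ι] {d : ℕ} (f : ι ≃ Fin d) :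
    volume (chainSet f) = volume (stdChain d) := by
  rw [chainSet_eq]
  exact (volume_measurePreserving_piCongrLeft (fun _ => ℝ) f).measure_preimage
    (meas_stdChain d).nullMeasurableSet

lemma chainSet_unique {ι : Type*} {d : ℕ} {f g : ι ≃ Fin d} {z : ι → ℝ}
    (hf : z ∈ chainSet f) (hg : z ∈ chainSet g) : f = g := by
  have h1 := hf.2
  have h2 := hg.2
  have hz : Function.Injective z := by
    have := h1.injective.comp f.injective
    simpa [Function.comp_def] using this
  have : z ∘ f.symm = z ∘ g.symm := by
    rw [← h1.range_inj h2, f.symm.surjective.range_comp, g.symm.surjective.range_comp]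
  have h3 : f.symm = g.symm := by
    ext i
    exact hz (congrFun this i)
  rw [← f.symm_symm, h3, g.symm_symm]

lemma exists_chain {ι : Type*} [Fintype ι] {d : ℕ} (hd : Fintype.card ι = d) {z : ι → ℝ}
    (hz : ∀ i, z i ∈ Set.Icc (0:ℝ) 1) (hi : Function.Injective z) :
    ∃ f : ι ≃ Fin d, z ∈ chainSet f := by
  let g := Fintype.equivFinOfCardEq hd
  let s := Tuple.sort (z ∘ g.symm)
  refine ⟨(s.trans g.symm).symm, hz, ?_⟩
  exact (Tuple.monotone_sort (z ∘ g.symm)).strictMono_of_injective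
    (hi.comp (g.symm.injective.comp s.injective))

lemma ae_inj {ι : Type*} [Fintype ι] : ∀ᵐ z : ι → ℝ, Function.Injective z := by
  classical
  have : ∀ i j : ι, i ≠ j → ∀ᵐ z : ι → ℝ, z i ≠ z j := by
    intro i j hij
    let s : Submodule ℝ (ι → ℝ) :=
      LinearMap.ker (LinearMap.proj (R := ℝ) (φ := fun _ : ι => ℝ) i - LinearMap.proj j)
    have hs : s ≠ ⊤ := by
      intro h
      have : Pi.single i (1:ℝ) ∈ s := h ▸ Submodule.mem_top
      simp [s, LinearMap.mem_ker, hij.symm] at this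
    have := Measure.addHaar_submodule volume s hs
    rw [ae_iff]
    convert this using 2
    ext z
    simp [s, sub_eq_zero]
  have h2 : ∀ᵐ z : ι → ℝ, ∀ i j, i ≠ j → z i ≠ z j := by
    rw [ae_all_iff]; intro i
    rw [ae_all_iff]; intro j
    by_cases h : i = j
    · simp [h]
    · filter_upwards [this i j h] with z hz _ using hz
  filter_upwards [h2] with z hz i j h
  by_contra hne
  exact hz i j hne h

lemma vol_of_chains {ι : Type*} [Fintype ι] {d : ℕ} (hd : Fintype.card ι = d)
    (S : Set (ι → ℝ)) (P : (ι ≃ Fin d) → Prop) (hS : ∀ z ∈ S, ∀ i, z i ∈ Set.Icc (0:ℝ) 1)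
    (h : ∀ f, ∀ z ∈ chainSet f, z ∈ S ↔ P f) :
    volume S = Nat.card {f // P f} * volume (stdChain d) := by
  classical
  have hae : S =ᵐ[volume] ⋃ f ∈ Finset.univ.filter P, chainSet f := by
    filter_upwards [ae_inj] with z hz
    apply propext
    change z ∈ S ↔ z ∈ ⋃ f ∈ Finset.univ.filter P, chainSet f
    simp only [Finset.mem_filter, Finset.mem_univ, true_and, Set.mem_iUnion, exists_prop]
    constructor
    · intro hzS
      obtain ⟨f, hf⟩ := exists_chain hd (hS z hzS) hz
      exact ⟨f, (h f z hf).1 hzS, hf⟩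
    · rintro ⟨f, hP, hf⟩
      exact (h f z hf).2 hP
  rw [measure_congr hae, measure_biUnion_finset _ (fun f _ => meas_chainSet f)]
  · simp only [vol_chainSet, Finset.sum_const, nsmul_eq_mul]
    rw [Nat.card_eq_fintype_card, Fintype.card_subtype]
  · intro f _ g _ hfg
    exact Set.disjoint_left.2 fun z h1 h2 => hfg (chainSet_unique h1 h2)

lemma vol_stdChain (d : ℕ) : volume (stdChain d) = ((Nat.factorial d : ℕ) : ENNReal)⁻¹ := by
  have := vol_of_chains (ι := Fin d) (d := d) (by simp) (Set.univ.pi fun _ => Set.Icc (0:ℝ) 1)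
    (fun _ => True) (fun z hz i => hz i trivial) (fun f z hz => ⟨fun _ => trivial, fun _ i _ => hz.1 i⟩)
  rw [volume_pi_pi] at this
  have hc : Nat.card {f : Fin d ≃ Fin d // True} = Nat.factorial d := by
    rw [Nat.card_congr (Equiv.subtypeUnivEquiv fun _ => trivial), Nat.card_eq_fintype_card]
    exact (Fintype.card_perm).trans (by simp)
  rw [hc] at this
  simp only [Real.volume_Icc, sub_zero, ENNReal.ofReal_one, Finset.prod_const_one] at this
  exact ENNReal.eq_inv_of_mul_eq_one_left (by rw [mul_comm]; exact this.symm)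

lemma part2 {V : Type*} [Fintype V] (G : SimpleGraph V) [Fintype G.edgeSet] :
    volume (OSet G) = (incLinExt G : ENNReal) /
      (Nat.factorial (Fintype.card V + Fintype.card G.edgeSet) : ENNReal) := by
  have hp := (volume_measurePreserving_sumPiEquivProdPi (fun _ : V ⊕ G.edgeSet => ℝ)).measure_preimage_equiv
    (OSet G)
  rw [← hp, vol_of_chains (d := Fintype.card V + Fintype.card G.edgeSet) (by simp) _
    (fun f => ∀ (e : G.edgeSet) (i : V), i ∈ (e : Sym2 V) → f (Sum.inr e) < f (Sum.inl i)),
    vol_stdChain, div_eq_mul_inv]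
  · rfl
  · rintro z hz (i | e)
    · exact hz.1 i
    · exact hz.2.1 e
  · intro f z hz
    have key : ∀ a b, z a < z b ↔ f a < f b := by
      intro a b
      have := hz.2.lt_iff_lt (a := f a) (b := f b)
      simpa using this
    constructor
    · intro h e i hi
      have h1 : z (Sum.inr e) ≤ z (Sum.inl i) := h.2.2 e i hi
      by_contra hc
      rcases (not_lt.1 hc).lt_or_eq with h2 | h2
      · exact absurd ((key _ _).2 h2) (not_lt.2 h1)
      · cases f.injective h2
    · intro h
      exact ⟨fun i => hz.1 _, fun e => hz.1 _, fun e i hi => ((key _ _).2 (h e i hi)).le⟩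

/-- `vol Q(G) = vol O(G) / 2^m = e(G) / (2^m * d!)`. -/
theorem volume_QSet_eq {V : Type} [Fintype V] [DecidableEq V]
    (G : SimpleGraph V) [DecidableRel G.Adj] :
    volume (QSet G) = volume (OSet G) / 2 ^ (Fintype.card G.edgeSet) ∧
    volume (QSet G) = (incLinExt G : ENNReal) /
      ((2 : ENNReal) ^ (Fintype.card G.edgeSet) *
        (Nat.factorial (Fintype.card V + Fintype.card G.edgeSet) : ENNReal)) := by
  refine ⟨part1 G, ?_⟩
  rw [part1 G, part2 G, div_eq_mul_inv, div_eq_mul_inv, div_eq_mul_inv,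
    ENNReal.mul_inv (by simp) (by simp), mul_assoc, mul_comm (_⁻¹ : ENNReal)]
end
end

section
/- For every m >= 1, the (2m+1)-dimensional Lebesgue volume of Q(S_m) equals (m!)^2 / (2m+1)!. -/
open MeasureTheory Filter

noncomputable section

/-- The star `S_m` with `m` edges: vertex `0` is the center, adjacent to the `m` leaves. -/
def starGraph (m : ℕ) : SimpleGraph (Fin (m + 1)) :=
  SimpleGraph.fromRel (fun i _ => i = 0)

instance (m : ℕ) : DecidableRel (starGraph m).Adj := fun i j =>
  decidable_of_iff _ (SimpleGraph.fromRel_adj _ i j).symm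

def leafSet (t : ℝ) : Set (ℝ × ℝ) :=
  {z | 0 ≤ z.1 ∧ z.1 ≤ 1 ∧ 0 ≤ z.2 ∧ z.2 ≤ z.1 ∧ z.2 ≤ t ∧ z.1 + t ≤ 1 + z.2}

lemma leafSet_measurable (t : ℝ) : MeasurableSet (leafSet t) := by
  apply IsClosed.measurableSet
  unfold leafSet
  refine (isClosed_le (by fun_prop) (by fun_prop)).and <|
    (isClosed_le (by fun_prop) (by fun_prop)).and <|
    (isClosed_le (by fun_prop) (by fun_prop)).and <|
    (isClosed_le (by fun_prop) (by fun_prop)).and <|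
    (isClosed_le (by fun_prop) (by fun_prop)).and <|
    isClosed_le (by fun_prop) (by fun_prop)

lemma integral_leaf (t : ℝ) (h0 : 0 ≤ t) (h1 : t ≤ 1) :
    ∫ x in (0:ℝ)..1, (min x t - max 0 (x + t - 1)) = t * (1 - t) := by
  have hc1 : Continuous fun x : ℝ => min x t := by fun_prop
  have hc2 : Continuous fun x : ℝ => max 0 (x + t - 1) := by fun_prop
  rw [intervalIntegral.integral_sub (hc1.intervalIntegrable _ _) (hc2.intervalIntegrable _ _)]
  have e1 : ∫ x in (0:ℝ)..1, min x t = t - t ^ 2 / 2 := by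
    rw [← intervalIntegral.integral_add_adjacent_intervals (b := t)
      (hc1.intervalIntegrable _ _) (hc1.intervalIntegrable _ _)]
    have a1 : ∫ x in (0:ℝ)..t, min x t = ∫ x in (0:ℝ)..t, x := by
      apply intervalIntegral.integral_congr
      intro x hx
      rw [Set.uIcc_of_le h0] at hx
      exact min_eq_left hx.2
    have a2 : ∫ x in t..1, min x t = ∫ x in t..1, t := by
      apply intervalIntegral.integral_congr
      intro x hx
      rw [Set.uIcc_of_le h1] at hx
      exact min_eq_right hx.1
    rw [a1, a2]
    simp
    ring
  have e2 : ∫ x in (0:ℝ)..1, max 0 (x + t - 1) = t ^ 2 / 2 := by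
    rw [← intervalIntegral.integral_add_adjacent_intervals (b := 1 - t)
      (hc2.intervalIntegrable _ _) (hc2.intervalIntegrable _ _)]
    have a1 : ∫ x in (0:ℝ)..(1 - t), max 0 (x + t - 1) = ∫ x in (0:ℝ)..(1 - t), 0 := by
      apply intervalIntegral.integral_congr
      intro x hx
      rw [Set.uIcc_of_le (by linarith)] at hx
      exact max_eq_left (by linarith [hx.2])
    have a2 : ∫ x in (1 - t)..1, max 0 (x + t - 1) = ∫ x in (1 - t)..1, (x + (t - 1)) := by
      apply intervalIntegral.integral_congr
      intro x hx
      rw [Set.uIcc_of_le (by linarith)] at hx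
      exact (max_eq_right (by linarith [hx.1])).trans (by ring)
    rw [a1, a2, intervalIntegral.integral_add (by simp) (by simp)]
    simp
    ring
  rw [e1, e2]
  ring

lemma volume_leafSet (t : ℝ) (h0 : 0 ≤ t) (h1 : t ≤ 1) :
    volume (leafSet t) = ENNReal.ofReal (t * (1 - t)) := by
  rw [Measure.volume_eq_prod, Measure.prod_apply (leafSet_measurable t)]
  have : ∀ x : ℝ, volume (Prod.mk x ⁻¹' leafSet t) =
      (Set.Ioc (0:ℝ) 1).indicator
        (fun x => ENNReal.ofReal (min x t - max 0 (x + t - 1))) x := by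
    intro x
    by_cases hx : x ∈ Set.Ioc (0:ℝ) 1
    · rw [Set.indicator_of_mem hx, ← Real.volume_Icc]
      congr 1
      ext y
      simp only [leafSet, Set.mem_preimage, Set.mem_setOf_eq, Set.mem_Icc, max_le_iff, le_min_iff]
      constructor
      · rintro ⟨_, _, _, _, _, _⟩
        refine ⟨⟨?_, ?_⟩, ?_, ?_⟩ <;> linarith
      · rintro ⟨⟨_, _⟩, _, _⟩
        refine ⟨hx.1.le, hx.2, ?_, ?_, ?_, ?_⟩ <;> linarith
    · rw [Set.indicator_of_notMem hx]
      refine measure_mono_null (t := {0}) ?_ (by simp)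
      intro y hy
      simp only [leafSet, Set.mem_preimage, Set.mem_setOf_eq] at hy
      obtain ⟨a, b, c, d, _, _⟩ := hy
      have : x = 0 := by
        by_contra h
        exact hx ⟨lt_of_le_of_ne a (Ne.symm h), b⟩
      simp only [Set.mem_singleton_iff]
      linarith
  simp_rw [this]
  rw [lintegral_indicator measurableSet_Ioc, ← integral_leaf t h0 h1,
    intervalIntegral.integral_of_le zero_le_one, ofReal_integral_eq_lintegral_ofReal]
  · have hc : Continuous fun x : ℝ => min x t - max 0 (x + t - 1) := by fun_prop
    exact (hc.integrableOn_Icc).mono_set Set.Ioc_subset_Icc_self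
  · rw [Filter.EventuallyLE, ae_restrict_iff' measurableSet_Ioc]
    refine Eventually.of_forall fun x hx => ?_
    have := hx.1
    have := hx.2
    simp only [Pi.zero_apply, sub_nonneg, max_le_iff, le_min_iff]
    refine ⟨⟨?_, ?_⟩, ?_, ?_⟩ <;> linarith

lemma beta_nat (m : ℕ) : ∫ x in (0:ℝ)..1, (x * (1 - x)) ^ m =
    (m.factorial : ℝ) ^ 2 / ((2 * m + 1).factorial : ℝ) := by
  have h := Complex.Gamma_mul_Gamma_eq_betaIntegral (s := (m:ℂ) + 1) (t := (m:ℂ) + 1)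
    (by simp; positivity) (by simp; positivity)
  have e : (m:ℂ) + 1 + (m + 1) = ((2 * m + 1 : ℕ) : ℂ) + 1 := by push_cast; ring
  rw [e, Complex.Gamma_nat_eq_factorial, Complex.Gamma_nat_eq_factorial, Complex.betaIntegral] at h
  have e2 : ∫ x : ℝ in 0..1, (x : ℂ) ^ ((m:ℂ) + 1 - 1) * (1 - (x : ℂ)) ^ ((m:ℂ) + 1 - 1)
      = ((∫ x in (0:ℝ)..1, (x * (1 - x)) ^ m : ℝ) : ℂ) := by
    rw [← intervalIntegral.integral_ofReal]
    congr 1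
    ext x
    simp [mul_pow]
  rw [e2] at h
  have h' : (m.factorial : ℝ) * m.factorial =
    (2 * m + 1).factorial * ∫ x in (0:ℝ)..1, (x * (1 - x)) ^ m := by exact_mod_cast h
  rw [eq_div_iff (by positivity)]
  linarith

def bigSet (m : ℕ) : Set (ℝ × (Fin m → ℝ × ℝ)) :=
  {q | q.1 ∈ Set.Icc (0:ℝ) 1 ∧ ∀ k, q.2 k ∈ leafSet q.1}

lemma bigSet_measurable (m : ℕ) : MeasurableSet (bigSet m) := by
  have hc : IsClosed {q : ℝ × (ℝ × ℝ) | q.2 ∈ leafSet q.1} := by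
    unfold leafSet
    refine (isClosed_le (by fun_prop) (by fun_prop)).and <|
      (isClosed_le (by fun_prop) (by fun_prop)).and <|
      (isClosed_le (by fun_prop) (by fun_prop)).and <|
      (isClosed_le (by fun_prop) (by fun_prop)).and <|
      (isClosed_le (by fun_prop) (by fun_prop)).and <|
      isClosed_le (by fun_prop) (by fun_prop)
  apply IsClosed.measurableSet
  have h1 : IsClosed {q : ℝ × (Fin m → ℝ × ℝ) | q.1 ∈ Set.Icc (0:ℝ) 1} :=
    isClosed_Icc.preimage continuous_fst
  have h2 : IsClosed {q : ℝ × (Fin m → ℝ × ℝ) | ∀ k, q.2 k ∈ leafSet q.1} := by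
    rw [Set.setOf_forall]
    refine isClosed_iInter fun k => ?_
    have hk : Continuous fun q : ℝ × (Fin m → ℝ × ℝ) => (q.1, q.2 k) := by fun_prop
    exact hc.preimage hk
  exact h1.inter h2

lemma volume_bigSet (m : ℕ) : volume (bigSet m) =
    (Nat.factorial m : ENNReal) ^ 2 / (Nat.factorial (2 * m + 1) : ENNReal) := by
  rw [Measure.volume_eq_prod, Measure.prod_apply (bigSet_measurable m)]
  have : ∀ x : ℝ, volume (Prod.mk x ⁻¹' bigSet m) =
      (Set.Icc (0:ℝ) 1).indicator (fun x => ENNReal.ofReal ((x * (1 - x)) ^ m)) x := by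
    intro x
    by_cases hx : x ∈ Set.Icc (0:ℝ) 1
    · rw [Set.indicator_of_mem hx]
      have : Prod.mk x ⁻¹' bigSet m = Set.univ.pi fun _ => leafSet x := by
        ext f
        simp only [bigSet, Set.mem_preimage, Set.mem_setOf_eq, Set.mem_pi, Set.mem_univ,
          true_imp_iff]
        exact and_iff_right hx
      rw [this, volume_pi_pi]
      simp only [volume_leafSet x hx.1 hx.2, Finset.prod_const, Finset.card_univ, Fintype.card_fin]
      rw [ENNReal.ofReal_pow]
      exact mul_nonneg hx.1 (by linarith [hx.2])
    · rw [Set.indicator_of_notMem hx]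
      have : Prod.mk x ⁻¹' bigSet m = ∅ := by
        ext f
        simp only [bigSet, Set.mem_preimage, Set.mem_setOf_eq, Set.mem_empty_iff_false, iff_false]
        exact fun h => hx h.1
      rw [this, measure_empty]
  simp_rw [this]
  have hc : Continuous fun x : ℝ => (x * (1 - x)) ^ m := by fun_prop
  rw [lintegral_indicator measurableSet_Icc, ← ofReal_integral_eq_lintegral_ofReal,
    integral_Icc_eq_integral_Ioc, ← intervalIntegral.integral_of_le zero_le_one, beta_nat,
    ENNReal.ofReal_div_of_pos (by positivity), ENNReal.ofReal_pow (by positivity),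
    ENNReal.ofReal_natCast, ENNReal.ofReal_natCast]
  · exact hc.integrableOn_Icc
  · rw [Filter.EventuallyLE, ae_restrict_iff' measurableSet_Icc]
    refine Eventually.of_forall fun x hx => ?_
    exact pow_nonneg (mul_nonneg hx.1 (by linarith [hx.2])) m

lemma star_adj (m : ℕ) (k : Fin m) : (starGraph m).Adj 0 k.succ := by
  simp [starGraph, SimpleGraph.fromRel_adj, (Fin.succ_ne_zero k).symm]

lemma star_adj_cases (m : ℕ) {i j : Fin (m + 1)} (h : (starGraph m).Adj i j) :
    (∃ k : Fin m, i = 0 ∧ j = k.succ) ∨ (∃ k : Fin m, j = 0 ∧ i = k.succ) := by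
  simp only [starGraph, SimpleGraph.fromRel_adj] at h
  obtain ⟨hne, rfl | rfl⟩ := h
  · obtain ⟨k, hk⟩ := Fin.exists_succ_eq.2 hne.symm
    exact Or.inl ⟨k, rfl, hk.symm⟩
  · obtain ⟨k, hk⟩ := Fin.exists_succ_eq.2 hne
    exact Or.inr ⟨k, rfl, hk.symm⟩

def starEdge (m : ℕ) (k : Fin m) : (starGraph m).edgeSet :=
  ⟨s(0, k.succ), (SimpleGraph.mem_edgeSet _).mpr (star_adj m k)⟩

lemma starEdge_bij (m : ℕ) : Function.Bijective (starEdge m) := by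
  constructor
  · intro a b h
    have h := congrArg Subtype.val h
    simp only [starEdge, Sym2.eq_iff] at h
    rcases h with h | h
    · exact Fin.succ_injective _ h.2
    · exact absurd h.2 (Fin.succ_ne_zero a)
  · rintro ⟨e, he⟩
    induction e using Sym2.ind with
    | _ i j =>
      rcases star_adj_cases m ((SimpleGraph.mem_edgeSet _).mp he) with ⟨k, rfl, rfl⟩ | ⟨k, rfl, rfl⟩
      · exact ⟨k, rfl⟩
      · exact ⟨k, Subtype.ext Sym2.eq_swap⟩

def starEquiv (m : ℕ) : Fin m ≃ (starGraph m).edgeSet := Equiv.ofBijective _ (starEdge_bij m)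

def starMap (m : ℕ) (p : (Fin (m + 1) → ℝ) × ((starGraph m).edgeSet → ℝ)) :
    ℝ × (Fin m → ℝ × ℝ) :=
  (p.1 0, fun k => (p.1 k.succ, p.2 (starEdge m k)))

lemma starMap_mp (m : ℕ) : MeasurePreserving (starMap m) volume volume := by
  have h1 := (volume_preserving_piFinSuccAbove (fun _ : Fin (m + 1) => ℝ) 0).prod
    (volume_measurePreserving_piCongrLeft (fun _ : (starGraph m).edgeSet => ℝ) (starEquiv m)).symm
  have h2 := volume_preserving_prodAssoc (α₁ := ℝ) (β₁ := Fin m → ℝ) (γ₁ := Fin m → ℝ)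
  have h3 := (MeasurePreserving.id (volume : Measure ℝ)).prod
    (volume_measurePreserving_arrowProdEquivProdArrow ℝ ℝ (Fin m)).symm
  exact h3.comp (h2.comp h1)

lemma QSet_eq (m : ℕ) : QSet (starGraph m) = starMap m ⁻¹' bigSet m := by
  ext p
  simp only [QSet, bigSet, starMap, leafSet, Set.mem_preimage, Set.mem_setOf_eq, Set.mem_Icc]
  constructor
  · rintro ⟨hx, hy, h⟩
    refine ⟨hx 0, fun k => ?_⟩
    obtain ⟨a, b, c, d⟩ := h 0 k.succ (star_adj m k)
    have := hx k.succ
    refine ⟨this.1, this.2, a, c, b, ?_⟩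
    rw [add_comm]
    exact d
  · rintro ⟨h0, h⟩
    refine ⟨?_, ?_, ?_⟩
    · intro i
      refine Fin.cases h0 (fun k => ⟨(h k).1, (h k).2.1⟩) i
    · intro e
      obtain ⟨k, rfl⟩ := (starEdge_bij m).2 e
      obtain ⟨a, b, c, d, e, f⟩ := h k
      exact ⟨c, by linarith⟩
    · intro i j hij
      rcases star_adj_cases m hij with ⟨k, rfl, rfl⟩ | ⟨k, rfl, rfl⟩
      · obtain ⟨a, b, c, d, e, f⟩ := h k
        refine ⟨c, e, d, ?_⟩
        rw [add_comm]
        exact f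
      · obtain ⟨a, b, c, d, e, f⟩ := h k
        have : (⟨s(k.succ, 0), (SimpleGraph.mem_edgeSet _).mpr hij⟩ : (starGraph m).edgeSet)
          = starEdge m k := Subtype.ext Sym2.eq_swap
        rw [this]
        exact ⟨c, d, e, f⟩

/-- `vol Q(S_m) = (m!)^2 / (2m+1)!`. -/
theorem volume_QSet_star (m : ℕ) (hm : 1 ≤ m) :
    volume (QSet (starGraph m)) =
      (Nat.factorial m : ENNReal) ^ 2 / (Nat.factorial (2 * m + 1) : ENNReal) := by
  rw [QSet_eq, (starMap_mp m).measure_preimage (bigSet_measurable m).nullMeasurableSet]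
  exact volume_bigSet m
end
end

section
/- For every m >= 0, the (2m+1)-dimensional Lebesgue volume of Q(P_m) equals A_{2m+1} / (2^m * (2m+1)!), where A_{2m+1} is the Euler number counting alternating permutations of {1, ..., 2m+1}. -/
open MeasureTheory Filter

noncomputable section

/-- The Euler number `A k`: the number of alternating permutations `σ` of
`{1, …, k}`, i.e. with `σ 1 > σ 2 < σ 3 > σ 4 < ⋯` (here written 0-indexed). -/
def eulerNumber (k : ℕ) : ℕ :=
  Nat.card {σ : Equiv.Perm (Fin k) //
    ∀ (i : ℕ) (h : i + 1 < k),
      (Even i → σ ⟨i + 1, h⟩ < σ ⟨i, Nat.lt_of_succ_lt h⟩) ∧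
      (Odd i → σ ⟨i, Nat.lt_of_succ_lt h⟩ < σ ⟨i + 1, h⟩)}

/-- The path `P_m` with `m + 1` vertices and `m` edges. -/
def pathG (m : ℕ) : SimpleGraph (Fin (m + 1)) :=
  SimpleGraph.fromRel (fun i j => (i : ℕ) + 1 = (j : ℕ))

instance (m : ℕ) : DecidableRel (pathG m).Adj := fun i j =>
  decidable_of_iff _ (SimpleGraph.fromRel_adj _ i j).symm

/-- weak alternation of a real vector -/
def AltVec (n : ℕ) (u : Fin n → ℝ) : Prop :=
  ∀ (i : ℕ) (h : i + 1 < n),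
      (Even i → u ⟨i + 1, h⟩ ≤ u ⟨i, Nat.lt_of_succ_lt h⟩) ∧
      (Odd i → u ⟨i, Nat.lt_of_succ_lt h⟩ ≤ u ⟨i + 1, h⟩)

def cubeSet (ι : Type*) : Set (ι → ℝ) := Set.pi Set.univ (fun _ => Set.Icc (0 : ℝ) 1)

lemma isClosed_altVec (n : ℕ) : IsClosed {u : Fin n → ℝ | AltVec n u} := by
  simp only [AltVec, Set.ofPred_forall, Set.ofPred_and]
  refine isClosed_iInter fun i => isClosed_iInter fun h => IsClosed.inter ?_ ?_
  · exact isClosed_iInter fun _ => isClosed_le (by fun_prop) (by fun_prop)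
  · exact isClosed_iInter fun _ => isClosed_le (by fun_prop) (by fun_prop)

lemma measurableSet_cubeSet (ι : Type*) [Fintype ι] : MeasurableSet (cubeSet ι) :=
  MeasurableSet.univ_pi fun _ => measurableSet_Icc

lemma volume_cubeSet (ι : Type*) [Fintype ι] : volume (cubeSet ι) = 1 := by
  rw [cubeSet, volume_pi_pi]
  simp

lemma ae_injective_vec (n : ℕ) : ∀ᵐ u : Fin n → ℝ, Function.Injective u := by
  have h : ∀ i j : Fin n, ∀ᵐ u : Fin n → ℝ, u i = u j → i = j := by
    intro i j
    by_cases hij : i = j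
    · simp [hij]
    · let L : (Fin n → ℝ) →ₗ[ℝ] ℝ :=
        (LinearMap.proj i : (Fin n → ℝ) →ₗ[ℝ] ℝ) - (LinearMap.proj j : (Fin n → ℝ) →ₗ[ℝ] ℝ)
      have hL : ∀ u, L u = u i - u j := fun u => rfl
      have h0 := Measure.addHaar_submodule (volume : Measure (Fin n → ℝ))
        (LinearMap.ker L) (by
          intro htop
          have h1 := LinearMap.congr_fun (LinearMap.ker_eq_top.1 htop) (Pi.single i 1)
          rw [hL] at h1
          simp [Ne.symm hij] at h1)
      rw [ae_iff]
      refine measure_mono_null ?_ h0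
      intro u hu
      simp only [Set.mem_ofPred_eq, Classical.not_imp] at hu
      rw [SetLike.mem_coe, LinearMap.mem_ker, hL]
      simp [hu.1]
  filter_upwards [ae_all_iff.2 fun i => ae_all_iff.2 (h i)] with u hu
  exact fun i j => hu i j

lemma card_alt (n : ℕ) (u : Fin n → ℝ) (hu : Function.Injective u) :
    Nat.card {τ : Equiv.Perm (Fin n) // AltVec n (u ∘ τ)} = eulerNumber n := by
  have hs : StrictMono (u ∘ Tuple.sort u) :=
    (Tuple.monotone_sort u).strictMono_of_injective (hu.comp (Tuple.sort u).injective)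
  unfold eulerNumber
  refine (Nat.card_congr ?_).symm
  refine (Equiv.mulLeft (Tuple.sort u)).subtypeEquiv ?_
  intro σ
  have hle : ∀ a b, u ((Tuple.sort u) a) ≤ u ((Tuple.sort u) b) ↔ a ≤ b := fun a b => hs.le_iff_le
  refine forall_congr' fun i => forall_congr' fun h => ?_
  simp only [Equiv.coe_mulLeft, Function.comp_apply, Equiv.Perm.coe_mul, hle]
  have hne : σ ⟨i + 1, h⟩ ≠ σ ⟨i, Nat.lt_of_succ_lt h⟩ := by
    intro h; have := σ.injective h; simp at this
  rw [lt_iff_le_and_ne, lt_iff_le_and_ne]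
  simp [hne, hne.symm]

lemma volume_alt (n : ℕ) :
    (n.factorial : ENNReal) * volume (cubeSet (Fin n) ∩ {u | AltVec n u}) = eulerNumber n := by
  classical
  have hm : ∀ τ : Equiv.Perm (Fin n), MeasurableSet {u : Fin n → ℝ | AltVec n (u ∘ τ)} := by
    intro τ
    exact ((isClosed_altVec n).preimage
      (f := fun u : Fin n → ℝ => u ∘ τ) (by fun_prop)).measurableSet
  have h1 : ∀ τ : Equiv.Perm (Fin n), volume (cubeSet (Fin n) ∩ {u | AltVec n u}) =
      ∫⁻ u in cubeSet (Fin n), Set.indicator {u : Fin n → ℝ | AltVec n (u ∘ τ)} 1 u := by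
    intro τ
    rw [lintegral_indicator_one (hm τ), Measure.restrict_apply (hm τ)]
    have hp := volume_measurePreserving_piCongrLeft (fun _ : Fin n => ℝ) τ.symm
    rw [← hp.measure_preimage
      ((measurableSet_cubeSet _).inter (isClosed_altVec n).measurableSet).nullMeasurableSet]
    congr 1
    have hT : ∀ u : Fin n → ℝ, MeasurableEquiv.piCongrLeft (fun _ : Fin n => ℝ) τ.symm u = u ∘ τ := by
      intro u; funext i
      have := MeasurableEquiv.piCongrLeft_apply_apply (β := fun _ : Fin n => ℝ) τ.symm u (τ i)
      simpa using this
    ext u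
    simp only [Set.mem_preimage, Set.mem_inter_iff, hT, Set.mem_ofPred_eq, cubeSet, Set.mem_pi,
      Set.mem_univ, true_imp_iff, Function.comp_apply]
    rw [and_comm, τ.surjective.forall (p := fun i => u i ∈ Set.Icc 0 1)]
  have h2 : (n.factorial : ENNReal) * volume (cubeSet (Fin n) ∩ {u | AltVec n u}) =
      ∑ τ : Equiv.Perm (Fin n),
        ∫⁻ u in cubeSet (Fin n), Set.indicator {u : Fin n → ℝ | AltVec n (u ∘ τ)} 1 u := by
    rw [← Finset.sum_congr rfl fun τ _ => h1 τ]
    simp [Fintype.card_perm]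
  rw [h2, ← lintegral_finsetSum _ fun τ _ => (measurable_one.indicator (hm τ))]
  have h3 : ∫⁻ u in cubeSet (Fin n), ∑ τ : Equiv.Perm (Fin n),
      Set.indicator {u : Fin n → ℝ | AltVec n (u ∘ τ)} (1 : (Fin n → ℝ) → ENNReal) u =
      ∫⁻ u in cubeSet (Fin n), (eulerNumber n : ENNReal) := by
    refine lintegral_congr_ae (ae_restrict_of_ae ?_)
    filter_upwards [ae_injective_vec n] with u hu
    rw [← card_alt n u hu, Nat.card_eq_fintype_card, Fintype.card_subtype]
    simp [Set.indicator_apply, Finset.sum_ite]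
  rw [h3]
  simp [volume_cubeSet]

/-- the tent map -/
def tentMap (x : ℝ) : ℝ := 2 * min x (1 - x)

lemma measurePreserving_tent :
    MeasurePreserving tentMap (volume.restrict (Set.Icc (0 : ℝ) 1))
      (volume.restrict (Set.Icc (0 : ℝ) 1)) := by
  have hmeas : Measurable tentMap := by unfold tentMap; fun_prop
  refine ⟨hmeas, ?_⟩
  haveI : IsFiniteMeasure (Measure.map tentMap (volume.restrict (Set.Icc (0 : ℝ) 1))) :=
    Measure.isFiniteMeasure_map _ _
  refine Measure.ext_of_Iic _ _ fun a => ?_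
  rw [Measure.map_apply hmeas measurableSet_Iic, Measure.restrict_apply (hmeas measurableSet_Iic),
    Measure.restrict_apply measurableSet_Iic]
  rcases lt_or_ge a 0 with ha | ha
  · have e1 : tentMap ⁻¹' Set.Iic a ∩ Set.Icc 0 1 = ∅ := by
      ext x
      simp only [tentMap, Set.mem_inter_iff, Set.mem_preimage, Set.mem_Iic, Set.mem_Icc,
        Set.mem_empty_iff_false, iff_false]
      rintro ⟨h1, h2, h3⟩
      have : 0 ≤ min x (1 - x) := le_min h2 (by linarith)
      linarith
    have e2 : Set.Iic a ∩ Set.Icc 0 1 = ∅ := by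
      ext x
      simp only [Set.mem_inter_iff, Set.mem_Iic, Set.mem_Icc, Set.mem_empty_iff_false, iff_false]
      rintro ⟨h1, h2, h3⟩
      linarith
    rw [e1, e2]
  · rcases lt_or_ge a 1 with ha1 | ha1
    · have e1 : tentMap ⁻¹' Set.Iic a ∩ Set.Icc 0 1 = Set.Icc 0 (a / 2) ∪ Set.Icc (1 - a / 2) 1 := by
        ext x
        simp only [tentMap, Set.mem_inter_iff, Set.mem_preimage, Set.mem_Iic, Set.mem_Icc,
          Set.mem_union]
        rcases le_total x (1 - x) with h | h
        · rw [min_eq_left h]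
          constructor
          · rintro ⟨h1, h2, h3⟩; left; constructor <;> linarith
          · rintro (⟨h1, h2⟩ | ⟨h1, h2⟩) <;> refine ⟨?_, ?_, ?_⟩ <;> linarith
        · rw [min_eq_right h]
          constructor
          · rintro ⟨h1, h2, h3⟩; right; constructor <;> linarith
          · rintro (⟨h1, h2⟩ | ⟨h1, h2⟩) <;> refine ⟨?_, ?_, ?_⟩ <;> linarith
      have e2 : Set.Iic a ∩ Set.Icc 0 1 = Set.Icc 0 a := by
        ext x
        simp only [Set.mem_inter_iff, Set.mem_Iic, Set.mem_Icc]
        constructor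
        · rintro ⟨h1, h2, h3⟩; exact ⟨h2, h1⟩
        · rintro ⟨h1, h2⟩; exact ⟨h2, h1, by linarith⟩
      rw [e1, e2, measure_union _ measurableSet_Icc, Real.volume_Icc, Real.volume_Icc,
        Real.volume_Icc, ← ENNReal.ofReal_add (by linarith) (by linarith)]
      · congr 1; ring
      · rw [Set.disjoint_left]
        rintro x ⟨h1, h2⟩ ⟨h3, h4⟩
        linarith
    · have e1 : tentMap ⁻¹' Set.Iic a ∩ Set.Icc 0 1 = Set.Icc 0 1 := by
        refine Set.inter_eq_right.2 fun x hx => ?_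
        simp only [tentMap, Set.mem_preimage, Set.mem_Iic]
        have := min_le_left x (1 - x)
        have := min_le_right x (1 - x)
        linarith
      have e2 : Set.Iic a ∩ Set.Icc 0 1 = Set.Icc 0 1 :=
        Set.inter_eq_right.2 fun x hx => hx.2.trans ha1
      rw [e1, e2]

lemma lintegral_tent (k : ℕ) (F : (Fin k → ℝ) → ENNReal) (hF : Measurable F) :
    ∫⁻ x in cubeSet (Fin k), F (fun i => tentMap (x i)) = ∫⁻ x in cubeSet (Fin k), F x := by
  have hp := measurePreserving_pi (fun _ : Fin k => volume.restrict (Set.Icc (0 : ℝ) 1))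
    (fun _ : Fin k => volume.restrict (Set.Icc (0 : ℝ) 1)) (fun _ => measurePreserving_tent)
  rw [cubeSet, volume_pi, Measure.restrict_pi_pi]
  exact hp.lintegral_comp hF

/-- zigzag order polytope, in product coordinates -/
def ZSet (m : ℕ) : Set ((Fin (m + 1) → ℝ) × (Fin m → ℝ)) :=
  {p | p.1 ∈ cubeSet _ ∧
    p.2 ∈ Set.pi Set.univ (fun i : Fin m => Set.Icc 0 (min (p.1 i.castSucc) (p.1 i.succ)))}

lemma isClosed_ZSet (m : ℕ) : IsClosed (ZSet m) := by
  simp only [ZSet, cubeSet, Set.mem_pi, Set.mem_univ, true_imp_iff, Set.mem_Icc,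
    Set.ofPred_forall, Set.ofPred_and]
  refine IsClosed.inter ?_ ?_
  · refine isClosed_iInter fun i => IsClosed.inter ?_ ?_
    · exact isClosed_le (by fun_prop) (by fun_prop)
    · exact isClosed_le (by fun_prop) (by fun_prop)
  · refine isClosed_iInter fun i => IsClosed.inter ?_ ?_
    · exact isClosed_le (by fun_prop) (by fun_prop)
    · exact isClosed_le (by fun_prop) (by fun_prop)

lemma volume_ZSet (m : ℕ) : volume (ZSet m) = ∫⁻ x in cubeSet (Fin (m + 1)),
    ∏ i : Fin m, ENNReal.ofReal (min (x i.castSucc) (x i.succ)) := by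
  rw [Measure.volume_eq_prod, Measure.prod_apply (isClosed_ZSet m).measurableSet,
    ← lintegral_indicator (measurableSet_cubeSet _)]
  refine lintegral_congr fun x => ?_
  by_cases hx : x ∈ cubeSet (Fin (m + 1))
  · rw [Set.indicator_of_mem hx]
    have : Prod.mk x ⁻¹' ZSet m =
        Set.pi Set.univ (fun i : Fin m => Set.Icc 0 (min (x i.castSucc) (x i.succ))) := by
      ext y; simp only [ZSet, Set.mem_preimage, Set.mem_ofPred_eq, hx, true_and]
    rw [this, volume_pi_pi]
    simp [Real.volume_Icc]
  · rw [Set.indicator_of_notMem hx]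
    have : Prod.mk x ⁻¹' ZSet m = ∅ := by
      ext y; simp only [ZSet, Set.mem_preimage, Set.mem_ofPred_eq, hx, false_and,
        Set.mem_empty_iff_false]
    rw [this, measure_empty]

def edgeFun (m : ℕ) (i : Fin m) : (pathG m).edgeSet :=
  ⟨s(i.castSucc, i.succ), by
    rw [SimpleGraph.mem_edgeSet, pathG, SimpleGraph.fromRel_adj]
    refine ⟨?_, Or.inl ?_⟩
    · exact (Fin.castSucc_lt_succ).ne
    · simp⟩

lemma edgeFun_bij (m : ℕ) : Function.Bijective (edgeFun m) := by
  constructor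
  · intro i j h
    have h := congrArg Subtype.val h
    simp only [edgeFun, Sym2.eq_iff, Fin.ext_iff, Fin.val_castSucc, Fin.val_succ] at h
    ext; omega
  · rintro ⟨e, he⟩
    induction e using Sym2.ind with
    | _ a b =>
      have h := he
      rw [SimpleGraph.mem_edgeSet, pathG, SimpleGraph.fromRel_adj] at h
      rcases h.2 with h | h
      · refine ⟨⟨a, by omega⟩, Subtype.ext ?_⟩
        exact Sym2.eq_iff.2 (Or.inl ⟨Fin.ext rfl, Fin.ext h⟩)
      · refine ⟨⟨b, by omega⟩, Subtype.ext ?_⟩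
        exact Sym2.eq_iff.2 (Or.inr ⟨Fin.ext rfl, Fin.ext h⟩)

def edgeE (m : ℕ) : Fin m ≃ (pathG m).edgeSet := Equiv.ofBijective _ (edgeFun_bij m)

lemma isClosed_QSet (m : ℕ) : IsClosed (QSet (pathG m)) := by
  simp only [QSet, Set.mem_Icc, Set.ofPred_forall, Set.ofPred_and]
  refine IsClosed.inter ?_ (IsClosed.inter ?_ ?_)
  · refine isClosed_iInter fun i => IsClosed.inter ?_ ?_
    · exact isClosed_le (by fun_prop) (by fun_prop)
    · exact isClosed_le (by fun_prop) (by fun_prop)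
  · refine isClosed_iInter fun i => IsClosed.inter ?_ ?_
    · exact isClosed_le (by fun_prop) (by fun_prop)
    · exact isClosed_le (by fun_prop) (by fun_prop)
  · refine isClosed_iInter fun i => isClosed_iInter fun j => isClosed_iInter fun h => ?_
    refine IsClosed.inter ?_ (IsClosed.inter ?_ (IsClosed.inter ?_ ?_))
    all_goals exact isClosed_le (by fun_prop) (by fun_prop)

lemma QSet_slice (m : ℕ) (x : Fin (m + 1) → ℝ) (hx : x ∈ cubeSet (Fin (m + 1))) :
    Prod.mk x ⁻¹' QSet (pathG m) = Set.pi Set.univ (fun e : (pathG m).edgeSet =>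
      Set.Icc (max 0 (x ((edgeE m).symm e).castSucc + x ((edgeE m).symm e).succ - 1))
        (min (x ((edgeE m).symm e).castSucc) (x ((edgeE m).symm e).succ))) := by
  have hx' : ∀ i, 0 ≤ x i ∧ x i ≤ 1 := fun i => hx i trivial
  ext y
  simp only [Set.mem_preimage, QSet, Set.mem_ofPred_eq, Set.mem_pi, Set.mem_univ, true_imp_iff,
    Set.mem_Icc, max_le_iff, le_min_iff]
  constructor
  · rintro ⟨-, -, h⟩
    rw [(edgeE m).surjective.forall]
    intro i
    have hadj : (pathG m).Adj i.castSucc i.succ := (edgeFun m i).2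
    have h1 : 0 ≤ y (edgeE m i) ∧ y (edgeE m i) ≤ x i.castSucc ∧ y (edgeE m i) ≤ x i.succ ∧
      x i.castSucc + x i.succ ≤ 1 + y (edgeE m i) := h _ _ hadj
    simp only [Equiv.symm_apply_apply]
    refine ⟨⟨h1.1, by linarith [h1.2.2.2]⟩, h1.2.1, h1.2.2.1⟩
  · intro h
    have key : ∀ i, (0 ≤ y (edgeE m i) ∧ x i.castSucc + x i.succ - 1 ≤ y (edgeE m i)) ∧
        y (edgeE m i) ≤ x i.castSucc ∧ y (edgeE m i) ≤ x i.succ := by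
      intro i; simpa using h (edgeE m i)
    refine ⟨hx', fun e => ?_, ?_⟩
    · obtain ⟨i, rfl⟩ := (edgeE m).surjective e
      exact ⟨(key i).1.1, (key i).2.1.trans (hx' _).2⟩
    intro a b hab
    obtain ⟨i, hi⟩ := (edgeE m).surjective ⟨s(a, b), (SimpleGraph.mem_edgeSet _).mpr hab⟩
    have hk := key i
    rw [hi] at hk
    have hv : s(i.castSucc, i.succ) = s(a, b) := congrArg Subtype.val hi
    rcases Sym2.eq_iff.1 hv with ⟨h1, h2⟩ | ⟨h1, h2⟩
    · rw [h1, h2] at hk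
      exact ⟨hk.1.1, hk.2.1, hk.2.2, by linarith [hk.1.2]⟩
    · rw [h1, h2] at hk
      exact ⟨hk.1.1, hk.2.2, hk.2.1, by linarith [hk.1.2]⟩

lemma len_eq (a b : ℝ) : min a b - max 0 (a + b - 1) = min (tentMap a) (tentMap b) / 2 := by
  unfold tentMap
  rcases le_total a b with h | h <;> rcases le_total 0 (a + b - 1) with h2 | h2 <;>
  rcases le_total a (1 - a) with h3 | h3 <;> rcases le_total b (1 - b) with h4 | h4 <;>
  simp only [min_eq_left, min_eq_right, max_eq_left, max_eq_right, h, h2, h3, h4] <;>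
  grind

lemma volume_QSet_eq_s6 (m : ℕ) : volume (QSet (pathG m)) = ∫⁻ x in cubeSet (Fin (m + 1)),
    ∏ i : Fin m, (ENNReal.ofReal (min (tentMap (x i.castSucc)) (tentMap (x i.succ))) / 2) := by
  rw [Measure.volume_eq_prod, Measure.prod_apply (isClosed_QSet m).measurableSet,
    ← lintegral_indicator (measurableSet_cubeSet _)]
  refine lintegral_congr fun x => ?_
  by_cases hx : x ∈ cubeSet (Fin (m + 1))
  · rw [Set.indicator_of_mem hx, QSet_slice m x hx, volume_pi_pi,
      ← (edgeE m).prod_comp]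
    refine Finset.prod_congr rfl fun i _ => ?_
    rw [Equiv.symm_apply_apply, Real.volume_Icc, len_eq, ENNReal.ofReal_div_of_pos (by norm_num)]
    simp
  · rw [Set.indicator_of_notMem hx]
    have : Prod.mk x ⁻¹' QSet (pathG m) = ∅ := by
      ext y
      simp only [Set.mem_preimage, Set.mem_empty_iff_false, iff_false]
      intro h
      exact hx fun i _ => h.1 i
    rw [this, measure_empty]

lemma volume_QSet_ZSet (m : ℕ) : volume (QSet (pathG m)) = volume (ZSet m) / 2 ^ m := by
  rw [volume_QSet_eq_s6, volume_ZSet]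
  rw [lintegral_tent (m + 1) (fun x => ∏ i : Fin m,
    (ENNReal.ofReal (min (x i.castSucc) (x i.succ)) / 2)) (by fun_prop)]
  simp only [div_eq_mul_inv, Finset.prod_mul_distrib, Finset.prod_const, Finset.card_univ,
    Fintype.card_fin]
  rw [lintegral_mul_const _ (by fun_prop), ENNReal.inv_pow]

def splitFun (m : ℕ) : Fin (m + 1) ⊕ Fin m → Fin (2 * m + 1) :=
  Sum.elim (fun i => ⟨2 * i, by omega⟩) (fun i => ⟨2 * i + 1, by omega⟩)

lemma splitFun_bij (m : ℕ) : Function.Bijective (splitFun m) := by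
  rw [Fintype.bijective_iff_injective_and_card]
  constructor
  · rintro (i | i) (j | j) h <;> simp only [splitFun, Sum.elim_inl, Sum.elim_inr, Fin.mk.injEq] at h
    · congr 1; ext; omega
    · omega
    · omega
    · congr 1; ext; omega
  · simp; omega

def splitE (m : ℕ) : Fin (m + 1) ⊕ Fin m ≃ Fin (2 * m + 1) := Equiv.ofBijective _ (splitFun_bij m)

lemma volume_ZSet_alt (m : ℕ) :
    volume (ZSet m) = volume (cubeSet (Fin (2 * m + 1)) ∩ {u | AltVec (2 * m + 1) u}) := by
  have h1 := volume_measurePreserving_sumPiEquivProdPi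
    (fun _ : Fin (m + 1) ⊕ Fin m => ℝ)
  have h2 := volume_measurePreserving_piCongrLeft (fun _ : Fin (2 * m + 1) => ℝ) (splitE m)
  rw [← h1.measure_preimage (isClosed_ZSet m).measurableSet.nullMeasurableSet,
    ← h2.measure_preimage ((measurableSet_cubeSet _).inter
      (isClosed_altVec _).measurableSet).nullMeasurableSet]
  congr 1
  ext v
  set u : Fin (2 * m + 1) → ℝ :=
    MeasurableEquiv.piCongrLeft (fun _ : Fin (2 * m + 1) => ℝ) (splitE m) v with hu
  have huv : ∀ s, v s = u (splitFun m s) := fun s =>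
    (MeasurableEquiv.piCongrLeft_apply_apply (β := fun _ : Fin (2 * m + 1) => ℝ)
      (splitE m) v s).symm
  have hl : ∀ i : Fin (m + 1), v (Sum.inl i) = u ⟨2 * i, by omega⟩ := fun i => huv _
  have hr : ∀ i : Fin m, v (Sum.inr i) = u ⟨2 * i + 1, by omega⟩ := fun i => huv _
  have hz : v ∈ (MeasurableEquiv.sumPiEquivProdPi fun _ : Fin (m + 1) ⊕ Fin m => ℝ) ⁻¹' ZSet m ↔
      (∀ i : Fin (m + 1), 0 ≤ v (Sum.inl i) ∧ v (Sum.inl i) ≤ 1) ∧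
      (∀ i : Fin m, 0 ≤ v (Sum.inr i) ∧ v (Sum.inr i) ≤ v (Sum.inl i.castSucc) ∧
        v (Sum.inr i) ≤ v (Sum.inl i.succ)) := by
    simp only [ZSet, cubeSet, MeasurableEquiv.sumPiEquivProdPi, Equiv.sumPiEquivProdPi,
      Set.mem_preimage, Set.mem_ofPred_eq, Set.mem_pi, Set.mem_univ, true_imp_iff, Set.mem_Icc,
      MeasurableEquiv.coe_mk, Equiv.coe_fn_mk, le_min_iff]
  rw [hz, Set.mem_preimage, ← hu]
  simp only [hl, hr, Set.mem_inter_iff, cubeSet, Set.mem_pi, Set.mem_univ, true_imp_iff,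
    Set.mem_Icc, Set.mem_ofPred_eq, AltVec, Fin.val_castSucc, Fin.val_succ]
  constructor
  · rintro ⟨ha, hb⟩
    refine ⟨fun k => ?_, fun k hk => ⟨?_, ?_⟩⟩
    · obtain ⟨s, rfl⟩ := (splitFun_bij m).2 k
      rcases s with i | i
      · exact ha i
      · exact ⟨(hb i).1, (hb i).2.1.trans (ha i.castSucc).2⟩
    · rintro ⟨j, rfl⟩
      have := (hb ⟨j, by omega⟩).2.1
      simpa only [two_mul] using this
    · rintro ⟨j, rfl⟩
      exact (hb ⟨j, by omega⟩).2.2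
  · rintro ⟨ha, hb⟩
    refine ⟨fun i => ha _, fun i => ⟨(ha _).1, ?_, ?_⟩⟩
    · exact (hb (2 * i) (by omega)).1 (even_two_mul _)
    · exact (hb (2 * i + 1) (by omega)).2 (odd_two_mul_add_one _)

/-- `vol Q(P_m) = A_{2m+1} / (2^m * (2m+1)!)`. -/
theorem volume_QSet_path (m : ℕ) :
    volume (QSet (pathG m)) = (eulerNumber (2 * m + 1) : ENNReal) /
      ((2 : ENNReal) ^ m * (Nat.factorial (2 * m + 1) : ENNReal)) := by
  rw [volume_QSet_ZSet, volume_ZSet_alt, ← volume_alt]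
  have h0 : ((2 * m + 1).factorial : ENNReal) ≠ 0 := by
    exact_mod_cast Nat.factorial_ne_zero _
  rw [mul_comm ((2 : ENNReal) ^ m), ENNReal.mul_div_mul_left _ _ h0 (ENNReal.natCast_ne_top _)]
end
end

section
/- For every real x with |x| < pi/2, the series sum over m >= 0 of 2^m * vol(Q(P_m)) * x^(2m+1) converges to tan(x), where vol(Q(P_m)) is the (2m+1)-dimensional Lebesgue volume of Q(P_m). -/
open MeasureTheory Filter

noncomputable section

def kerK (a b : ℝ) : ℝ := min (min a b) (min (1 - a) (1 - b))

lemma kerK_cont : Continuous (fun p : ℝ × ℝ => kerK p.1 p.2) := by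
  unfold kerK; fun_prop

def opT (f : ℝ → ℝ) (b : ℝ) : ℝ := ∫ a in (0:ℝ)..1, kerK a b * f a

lemma opT_cont {f : ℝ → ℝ} (hf : Continuous f) : Continuous (opT f) := by
  unfold opT
  apply intervalIntegral.continuous_parametric_intervalIntegral_of_continuous'
  unfold kerK Function.uncurry
  fun_prop

lemma integrand_int {f : ℝ → ℝ} (hf : Continuous f) (b u v : ℝ) :
    IntervalIntegrable (fun a => kerK a b * f a) volume u v := by
  apply Continuous.intervalIntegrable
  unfold kerK
  fun_prop

lemma kerK_nonneg {a b : ℝ} (ha : a ∈ Set.Icc (0:ℝ) 1) (hb : b ∈ Set.Icc (0:ℝ) 1) :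
    0 ≤ kerK a b := by
  obtain ⟨h1, h2⟩ := ha
  obtain ⟨h3, h4⟩ := hb
  unfold kerK
  simp only [le_min_iff]
  refine ⟨⟨?_, ?_⟩, ?_, ?_⟩ <;> linarith

lemma opT_congr {f g : ℝ → ℝ} (h : ∀ a ∈ Set.Icc (0:ℝ) 1, f a = g a) (b : ℝ) :
    opT f b = opT g b := by
  unfold opT
  apply intervalIntegral.integral_congr
  intro a ha
  rw [Set.uIcc_of_le zero_le_one] at ha
  simp only [h a ha]

lemma opT_mono {f g : ℝ → ℝ} (hf : Continuous f) (hg : Continuous g)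
    (h : ∀ a ∈ Set.Icc (0:ℝ) 1, f a ≤ g a) {b : ℝ} (hb : b ∈ Set.Icc (0:ℝ) 1) :
    opT f b ≤ opT g b := by
  unfold opT
  apply intervalIntegral.integral_mono_on zero_le_one (integrand_int hf b _ _)
    (integrand_int hg b _ _)
  intro a ha
  exact mul_le_mul_of_nonneg_left (h a ha) (kerK_nonneg ha hb)

lemma opT_lin {f g : ℝ → ℝ} (hf : Continuous f) (hg : Continuous g) (c d b : ℝ) :
    opT (fun a => c * f a + d * g a) b = c * opT f b + d * opT g b := by
  unfold opT
  rw [← intervalIntegral.integral_const_mul, ← intervalIntegral.integral_const_mul,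
    ← intervalIntegral.integral_add ((integrand_int hf b _ _).const_mul c)
      ((integrand_int hg b _ _).const_mul d)]
  congr 1
  ext a
  ring

lemma opT_smul {f : ℝ → ℝ} (c b : ℝ) :
    opT (fun a => c * f a) b = c * opT f b := by
  unfold opT
  rw [← intervalIntegral.integral_const_mul]
  congr 1
  ext a
  ring

lemma opT_cos_aux (x : ℝ) (hx : x ≠ 0) {b : ℝ} (hb0 : 0 ≤ b) (hb : b ≤ 1 / 2) :
    opT (fun a => Real.cos (x * (1 - 2 * a))) b
      = (Real.cos (x * (1 - 2 * b)) - Real.cos x) / (2 * x ^ 2) := by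
  have hc : Continuous (fun a : ℝ => Real.cos (x * (1 - 2 * a))) := by fun_prop
  unfold opT
  rw [← intervalIntegral.integral_add_adjacent_intervals (integrand_int hc b 0 b)
    (integrand_int hc b b 1),
    ← intervalIntegral.integral_add_adjacent_intervals (integrand_int hc b b (1 - b))
    (integrand_int hc b (1 - b) 1)]
  have hS : ∀ a : ℝ, HasDerivAt (fun a : ℝ => -(Real.sin (x * (1 - 2 * a)) / (2 * x)))
      (Real.cos (x * (1 - 2 * a))) a := by
    intro a
    have h1 : HasDerivAt (fun a : ℝ => x * (1 - 2 * a)) (x * (-(2 * 1))) a :=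
      (((hasDerivAt_id a).const_mul 2).const_sub 1).const_mul x
    have h2 := ((h1.sin).div_const (2 * x)).neg
    refine HasDerivAt.congr_deriv h2 ?_
    field_simp
  have hC : ∀ a : ℝ, HasDerivAt (fun a : ℝ => (Real.cos (x * (1 - 2 * a)) / (4 * x ^ 2)))
      (Real.sin (x * (1 - 2 * a)) / (2 * x)) a := by
    intro a
    have h1 : HasDerivAt (fun a : ℝ => x * (1 - 2 * a)) (x * (-(2 * 1))) a :=
      (((hasDerivAt_id a).const_mul 2).const_sub 1).const_mul x
    have h2 := ((h1.cos).div_const (4 * x ^ 2))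
    refine HasDerivAt.congr_deriv h2 ?_
    field_simp
    ring
  have i1 : ∫ a in (0:ℝ)..b, kerK a b * Real.cos (x * (1 - 2 * a))
      = (b * -(Real.sin (x * (1 - 2 * b)) / (2 * x)) + Real.cos (x * (1 - 2 * b)) / (4 * x ^ 2))
        - (0 * -(Real.sin (x * (1 - 2 * 0)) / (2 * x)) + Real.cos (x * (1 - 2 * 0)) / (4 * x ^ 2)) := by
    rw [← intervalIntegral.integral_eq_sub_of_hasDerivAt
      (f := fun a => a * -(Real.sin (x * (1 - 2 * a)) / (2 * x))
        + Real.cos (x * (1 - 2 * a)) / (4 * x ^ 2))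
      (f' := fun a => a * Real.cos (x * (1 - 2 * a)))]
    · apply intervalIntegral.integral_congr
      intro a ha
      rw [Set.uIcc_of_le hb0] at ha
      obtain ⟨h1, h2⟩ := ha
      have : kerK a b = a := by
        unfold kerK
        rw [min_eq_left h2, min_eq_left]
        simp only [le_min_iff]
        constructor <;> linarith
      simp only [this]
    · intro a _
      have := ((hasDerivAt_id a).mul (hS a)).add (hC a)
      refine HasDerivAt.congr_deriv this ?_
      simp only [id]
      ring
    · apply Continuous.intervalIntegrable
      fun_prop
  have i2 : ∫ a in b..(1 - b), kerK a b * Real.cos (x * (1 - 2 * a))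
      = (b * -(Real.sin (x * (1 - 2 * (1 - b))) / (2 * x)))
        - (b * -(Real.sin (x * (1 - 2 * b)) / (2 * x))) := by
    rw [← intervalIntegral.integral_eq_sub_of_hasDerivAt
      (f := fun a => b * -(Real.sin (x * (1 - 2 * a)) / (2 * x)))
      (f' := fun a => b * Real.cos (x * (1 - 2 * a)))]
    · apply intervalIntegral.integral_congr
      intro a ha
      rw [Set.uIcc_of_le (by linarith)] at ha
      obtain ⟨h1, h2⟩ := ha
      have : kerK a b = b := by
        unfold kerK
        rw [min_eq_right h1, min_eq_left]
        simp only [le_min_iff]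
        constructor <;> linarith
      simp only [this]
    · intro a _
      exact (hS a).const_mul b
    · apply Continuous.intervalIntegrable
      fun_prop
  have i3 : ∫ a in (1 - b)..1, kerK a b * Real.cos (x * (1 - 2 * a))
      = ((1 - 1) * -(Real.sin (x * (1 - 2 * 1)) / (2 * x)) - Real.cos (x * (1 - 2 * 1)) / (4 * x ^ 2))
        - ((1 - (1 - b)) * -(Real.sin (x * (1 - 2 * (1 - b))) / (2 * x))
          - Real.cos (x * (1 - 2 * (1 - b))) / (4 * x ^ 2)) := by
    rw [← intervalIntegral.integral_eq_sub_of_hasDerivAt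
      (f := fun a => (1 - a) * -(Real.sin (x * (1 - 2 * a)) / (2 * x))
        - Real.cos (x * (1 - 2 * a)) / (4 * x ^ 2))
      (f' := fun a => (1 - a) * Real.cos (x * (1 - 2 * a)))]
    · apply intervalIntegral.integral_congr
      intro a ha
      rw [Set.uIcc_of_le (by linarith)] at ha
      obtain ⟨h1, h2⟩ := ha
      have : kerK a b = 1 - a := by
        unfold kerK
        rw [min_eq_left (a := 1 - a) (by linarith), min_eq_right]
        simp only [le_min_iff]
        constructor <;> linarith
      simp only [this]
    · intro a _
      have := (((hasDerivAt_id a).const_sub 1).mul (hS a)).sub (hC a)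
      refine HasDerivAt.congr_deriv this ?_
      simp only [id]
      ring
    · apply Continuous.intervalIntegrable
      fun_prop
  rw [i1, i2, i3]
  have e1 : x * (1 - 2 * (1 - b)) = -(x * (1 - 2 * b)) := by ring
  have e2 : x * (1 - 2 * 1) = -x := by ring
  have e3 : x * (1 - 2 * 0) = x := by ring
  rw [e1, e2, e3, Real.cos_neg, Real.cos_neg]
  field_simp
  ring

lemma opT_symm_cos (x b : ℝ) :
    opT (fun a => Real.cos (x * (1 - 2 * a))) b
      = opT (fun a => Real.cos (x * (1 - 2 * a))) (1 - b) := by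
  unfold opT
  have hr := intervalIntegral.integral_comp_sub_left (a := 0) (b := 1)
    (fun a => kerK a (1 - b) * Real.cos (x * (1 - 2 * a))) 1
  simp only [sub_self, sub_zero] at hr
  rw [← hr]
  apply intervalIntegral.integral_congr
  intro a _
  have h1 : kerK (1 - a) (1 - b) = kerK a b := by
    unfold kerK
    rw [sub_sub_cancel, sub_sub_cancel, min_comm]
  have h2 : x * (1 - 2 * (1 - a)) = -(x * (1 - 2 * a)) := by ring
  simp only [h1, h2, Real.cos_neg]

lemma opT_cos (x : ℝ) (hx : x ≠ 0) {b : ℝ} (hb : b ∈ Set.Icc (0:ℝ) 1) :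
    opT (fun a => Real.cos (x * (1 - 2 * a))) b
      = (Real.cos (x * (1 - 2 * b)) - Real.cos x) / (2 * x ^ 2) := by
  obtain ⟨h1, h2⟩ := hb
  rcases le_total b (1/2) with h | h
  · exact opT_cos_aux x hx h1 h
  · rw [opT_symm_cos, opT_cos_aux x hx (by linarith) (by linarith)]
    have h2 : x * (1 - 2 * (1 - b)) = -(x * (1 - 2 * b)) := by ring
    rw [h2, Real.cos_neg]

def itT (f : ℝ → ℝ) : ℕ → ℝ → ℝ
  | 0 => f
  | n + 1 => opT (itT f n)

lemma itT_cont {f : ℝ → ℝ} (hf : Continuous f) (n : ℕ) : Continuous (itT f n) := by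
  induction n with
  | zero => exact hf
  | succ n ih => exact opT_cont ih

lemma itT_nonneg {f : ℝ → ℝ} (hf : Continuous f) (h : ∀ a ∈ Set.Icc (0:ℝ) 1, 0 ≤ f a) (n : ℕ) :
    ∀ a ∈ Set.Icc (0:ℝ) 1, 0 ≤ itT f n a := by
  induction n with
  | zero => exact h
  | succ n ih =>
    intro a ha
    have := opT_mono (f := fun _ => 0) continuous_const (itT_cont hf n) ih ha
    simpa [opT, itT] using this

lemma kerK_le_sin {a b : ℝ} (hb : b ∈ Set.Icc (0:ℝ) 1) :
    kerK a b ≤ 1 / 2 * Real.cos (Real.pi / 2 * (1 - 2 * b)) := by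
  obtain ⟨h1, h2⟩ := hb
  have hp := Real.pi_pos
  have e : Real.cos (Real.pi / 2 * (1 - 2 * b)) = Real.sin (Real.pi * b) := by
    rw [← Real.cos_pi_div_two_sub]; congr 1; ring
  have e' : Real.sin (Real.pi * b) = Real.sin (Real.pi * (1 - b)) := by
    rw [← Real.sin_pi_sub]; congr 1; ring
  have key : ∀ c : ℝ, 0 ≤ c → c ≤ 1 / 2 → 2 * c ≤ Real.sin (Real.pi * c) := by
    intro c hc0 hc
    have := Real.mul_le_sin (x := Real.pi * c) (by positivity) (by nlinarith)
    have h3 : 2 / Real.pi * (Real.pi * c) = 2 * c := by field_simp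
    linarith
  rw [e]
  rcases le_total b (1/2) with h | h
  · have h5 : kerK a b ≤ b := (min_le_left _ _).trans (min_le_right _ _)
    linarith [key b h1 h]
  · have h5 : kerK a b ≤ 1 - b := (min_le_right _ _).trans (min_le_right _ _)
    rw [e']
    linarith [key (1 - b) (by linarith) (by linarith)]

lemma analytic_part (x : ℝ) (hx : |x| < Real.pi / 2) (hx0 : x ≠ 0) :
    HasSum (fun m : ℕ => (2 * x ^ 2) ^ m * ∫ a in (0:ℝ)..1, itT (fun _ => 1) m a)
      (Real.tan x / x) := by
  have hcos : 0 < Real.cos x := Real.cos_pos_of_mem_Ioo (abs_lt.mp hx)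
  set F : ℝ → ℝ := fun a => 1 / Real.cos x * Real.cos (x * (1 - 2 * a)) with hF
  have hFc : Continuous F := by fun_prop
  have hF0 : ∀ a ∈ Set.Icc (0:ℝ) 1, 0 ≤ F a := by
    rintro a ⟨h1, h2⟩
    have h3 : |x * (1 - 2 * a)| < Real.pi / 2 := by
      rw [abs_mul]
      have : |1 - 2 * a| ≤ 1 := by rw [abs_le]; constructor <;> linarith
      calc |x| * |1 - 2 * a| ≤ |x| * 1 := by gcongr
        _ < _ := by simpa using hx
    have := Real.cos_pos_of_mem_Ioo (abs_lt.mp h3)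
    simp only [hF]
    positivity
  have hF1 : ∀ a, F a ≤ 1 / Real.cos x := by
    intro a
    have := Real.cos_le_one (x * (1 - 2 * a))
    have h2 : 0 < 1 / Real.cos x := by positivity
    simp only [hF]
    nlinarith
  have one_c : Continuous (fun _ : ℝ => (1:ℝ)) := continuous_const
  have hrec : ∀ k, ∀ a ∈ Set.Icc (0:ℝ) 1,
      itT (fun _ => 1) k a = itT F k a - 2 * x ^ 2 * itT F (k + 1) a := by
    intro k
    induction k with
    | zero =>
      intro a ha
      simp only [itT]
      rw [hF, opT_smul, opT_cos x hx0 ha]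
      field_simp
      ring
    | succ k ih =>
      intro a ha
      change opT (itT (fun _ => 1) k) a = opT (itT F k) a - 2 * x ^ 2 * opT (itT F (k + 1)) a
      have := opT_lin (itT_cont hFc k) (itT_cont hFc (k+1)) 1 (-(2 * x ^ 2)) a
      rw [opT_congr (g := fun a => 1 * itT F k a + (-(2 * x ^ 2)) * itT F (k + 1) a), this]
      · ring
      · intro c hc
        rw [ih c hc]; ring
  set φ : ℝ → ℝ := fun a => Real.cos (Real.pi / 2 * (1 - 2 * a)) with hφ
  have hφc : Continuous φ := by fun_prop
  set C : ℝ := 1 / Real.cos x * (1 / 2) with hC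
  have hCpos : 0 < C := by positivity
  have hbound : ∀ N, ∀ a ∈ Set.Icc (0:ℝ) 1,
      itT F (N + 1) a ≤ C * (2 / Real.pi ^ 2) ^ N * φ a := by
    intro N
    induction N with
    | zero =>
      intro a ha
      have h1 : opT F a ≤ ∫ b in (0:ℝ)..1, C * φ a := by
        unfold opT
        apply intervalIntegral.integral_mono_on zero_le_one (integrand_int hFc a _ _)
          (by simp)
        intro b hb
        have h1 := hF0 b hb
        have h2 := hF1 b
        have h3 := kerK_le_sin (a := b) ha
        have h4 := kerK_nonneg hb ha
        calc kerK b a * F b ≤ (1 / 2 * φ a) * (1 / Real.cos x) :=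
              mul_le_mul h3 h2 h1 (h4.trans h3)
          _ = C * φ a := by rw [hC]; ring
      simpa [itT] using h1
    | succ N ih =>
      intro a ha
      change opT (itT F (N + 1)) a ≤ _
      refine (opT_mono (itT_cont hFc _) (by fun_prop) ih ha).trans ?_
      rw [opT_smul, hφ, opT_cos _ (by positivity) ha, Real.cos_pi_div_two]
      apply le_of_eq
      have := Real.pi_pos
      rw [pow_succ, sub_zero, show 2 * (Real.pi / 2) ^ 2 = Real.pi ^ 2 / 2 by ring, div_div_eq_mul_div]
      ring
  have hIntg : ∀ (k : ℕ), IntervalIntegrable (itT F k) volume 0 1 :=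
    fun k => (itT_cont hFc k).intervalIntegrable _ _
  have hpart : ∀ N, ∑ m ∈ Finset.range N, (2 * x ^ 2) ^ m * ∫ a in (0:ℝ)..1, itT (fun _ => 1) m a
      = (∫ a in (0:ℝ)..1, F a) - (2 * x ^ 2) ^ N * ∫ a in (0:ℝ)..1, itT F N a := by
    intro N
    induction N with
    | zero => simp [itT]
    | succ N ih =>
      rw [Finset.sum_range_succ, ih]
      have : ∫ a in (0:ℝ)..1, itT (fun _ => 1) N a
          = (∫ a in (0:ℝ)..1, itT F N a) - 2 * x ^ 2 * ∫ a in (0:ℝ)..1, itT F (N + 1) a := by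
        rw [← intervalIntegral.integral_const_mul, ← intervalIntegral.integral_sub (hIntg N)
          ((hIntg (N+1)).const_mul _)]
        apply intervalIntegral.integral_congr
        intro a ha
        rw [Set.uIcc_of_le zero_le_one] at ha
        exact hrec N a ha
      rw [this]
      ring
  have hFint : ∫ a in (0:ℝ)..1, F a = Real.tan x / x := by
    rw [hF, intervalIntegral.integral_const_mul]
    have : ∫ a in (0:ℝ)..1, Real.cos (x * (1 - 2 * a))
        = -(Real.sin (x * (1 - 2 * 1)) / (2 * x)) - -(Real.sin (x * (1 - 2 * 0)) / (2 * x)) := by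
      rw [← intervalIntegral.integral_eq_sub_of_hasDerivAt
        (f := fun a => -(Real.sin (x * (1 - 2 * a)) / (2 * x)))]
      · intro a _
        have h1 : HasDerivAt (fun a : ℝ => x * (1 - 2 * a)) (x * (-(2 * 1))) a :=
          (((hasDerivAt_id a).const_mul 2).const_sub 1).const_mul x
        have h2 := ((h1.sin).div_const (2 * x)).neg
        refine HasDerivAt.congr_deriv h2 ?_
        field_simp
      · apply Continuous.intervalIntegrable
        fun_prop
    rw [this, Real.tan_eq_sin_div_cos]
    have e2 : x * (1 - 2 * 1) = -x := by ring
    have e3 : x * (1 - 2 * 0) = x := by ring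
    rw [e2, e3, Real.sin_neg]
    field_simp
    ring
  rw [hasSum_iff_tendsto_nat_of_nonneg]
  · simp only [hpart, hFint]
    have hq : 2 * x ^ 2 * (2 / Real.pi ^ 2) < 1 := by
      have h1 : x ^ 2 < (Real.pi / 2) ^ 2 := by
        rw [← sq_abs]; gcongr
      have := Real.pi_pos
      rw [mul_div_assoc', div_lt_one (by positivity)]
      nlinarith
    have hlim : Tendsto (fun N : ℕ => (2 * x ^ 2) ^ N * ∫ a in (0:ℝ)..1, itT F N a) atTop
        (nhds 0) := by
      rw [← tendsto_add_atTop_iff_nat 1]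
      have h0 : Tendsto (fun N : ℕ => (2 * x ^ 2 * C) * (2 * x ^ 2 * (2 / Real.pi ^ 2)) ^ N) atTop
          (nhds 0) := by
        simpa using (tendsto_pow_atTop_nhds_zero_of_lt_one (by positivity) hq).const_mul
          (2 * x ^ 2 * C)
      refine squeeze_zero (fun N => ?_) (fun N => ?_) h0
      · apply mul_nonneg (by positivity)
        exact intervalIntegral.integral_nonneg zero_le_one (itT_nonneg hFc hF0 _)
      · have : ∫ a in (0:ℝ)..1, itT F (N + 1) a ≤ ∫ a in (0:ℝ)..1, C * (2 / Real.pi ^ 2) ^ N := by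
          apply intervalIntegral.integral_mono_on zero_le_one (hIntg _) (by simp)
          intro a ha
          refine (hbound N a ha).trans ?_
          exact mul_le_of_le_one_right (by positivity) (Real.cos_le_one _)
        have h2 : ∫ a in (0:ℝ)..1, itT F (N + 1) a ≤ C * (2 / Real.pi ^ 2) ^ N := by
          simpa using this
        calc _ ≤ (2 * x ^ 2) ^ (N + 1) * (C * (2 / Real.pi ^ 2) ^ N) := by gcongr
          _ = _ := by rw [mul_pow (2 * x ^ 2)]; ring
    simpa using hlim.const_sub (Real.tan x / x)
  · intro m
    apply mul_nonneg (by positivity)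
    exact intervalIntegral.integral_nonneg zero_le_one
      (itT_nonneg one_c (fun _ _ => zero_le_one) _)

def hE : ℝ → ENNReal := (Set.Icc (0:ℝ) 1).indicator (fun _ => 1)

def opL (h : ℝ → ENNReal) (b : ℝ) : ENNReal := ∫⁻ a, h a * ENNReal.ofReal (kerK a b)

lemma kerK_neg {a b : ℝ} (hb : b ∉ Set.Icc (0:ℝ) 1) : kerK a b ≤ 0 := by
  by_contra! h
  unfold kerK at h
  simp only [lt_min_iff] at h
  exact hb ⟨by linarith [h.1.2], by linarith [h.2.2]⟩

lemma opL_indicator {f : ℝ → ℝ} (hf : Continuous f) (h0 : ∀ a ∈ Set.Icc (0:ℝ) 1, 0 ≤ f a) :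
    opL ((Set.Icc (0:ℝ) 1).indicator (fun a => ENNReal.ofReal (f a)))
      = (Set.Icc (0:ℝ) 1).indicator (fun a => ENNReal.ofReal (opT f a)) := by
  ext b
  unfold opL
  by_cases hb : b ∈ Set.Icc (0:ℝ) 1
  · rw [Set.indicator_of_mem hb]
    unfold opT
    rw [intervalIntegral.integral_of_le zero_le_one, ← integral_Icc_eq_integral_Ioc,
      ofReal_integral_eq_lintegral_ofReal]
    · rw [← lintegral_indicator measurableSet_Icc]
      congr 1
      ext a
      by_cases ha : a ∈ Set.Icc (0:ℝ) 1
      · rw [Set.indicator_of_mem ha, Set.indicator_of_mem ha,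
          ENNReal.ofReal_mul (kerK_nonneg ha hb), mul_comm]
      · rw [Set.indicator_of_notMem ha, Set.indicator_of_notMem ha, zero_mul]
    · apply Continuous.integrableOn_Icc
      unfold kerK
      fun_prop
    · refine (ae_restrict_iff' measurableSet_Icc).mpr (Eventually.of_forall fun a ha => ?_)
      exact mul_nonneg (kerK_nonneg ha hb) (h0 a ha)
  · rw [Set.indicator_of_notMem hb]
    simp [ENNReal.ofReal_of_nonpos (kerK_neg hb)]

lemma opL_meas {h : ℝ → ENNReal} (hm : Measurable h) : Measurable (opL h) := by
  unfold opL
  apply Measurable.lintegral_prod_left'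
    (f := fun p : ℝ × ℝ => h p.1 * ENNReal.ofReal (kerK p.1 p.2))
  have := kerK_cont.measurable
  fun_prop

lemma lintegral_path (m : ℕ) : ∀ h : ℝ → ENNReal, Measurable h →
    ∫⁻ x : Fin (m + 1) → ℝ, h (x 0) * ∏ k : Fin m, ENNReal.ofReal (kerK (x k.castSucc) (x k.succ))
      = ∫⁻ a, (opL^[m] h) a := by
  induction m with
  | zero =>
    intro h hm
    simp only [Finset.univ_eq_empty, Finset.prod_empty, mul_one, Function.iterate_zero, id]
    exact (volume_preserving_funUnique (Fin 1) ℝ).lintegral_comp hm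
  | succ m ih =>
    intro h hm
    rw [Function.iterate_succ_apply, ← ih _ (opL_meas hm)]
    have mp := (volume_preserving_piFinSuccAbove (fun _ : Fin (m + 2) => ℝ) 0).symm
    have hk := kerK_cont.measurable
    have hk' : ∀ k : Fin (m + 1), Measurable fun x : Fin (m + 2) → ℝ =>
        kerK (x k.castSucc) (x k.succ) := fun k =>
      hk.comp (f := fun x : Fin (m + 2) → ℝ => (x k.castSucc, x k.succ)) (by fun_prop)
    have hM : Measurable fun x : Fin (m + 2) → ℝ => h (x 0) *
        ∏ k : Fin (m + 1), ENNReal.ofReal (kerK (x k.castSucc) (x k.succ)) := by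
      fun_prop
    rw [← mp.lintegral_comp hM]
    have hM2 := hM.comp mp.measurable
    rw [Measure.volume_eq_prod]
    refine (lintegral_prod_symm' _ hM2).trans ?_
    simp only [Function.comp_apply]
    apply lintegral_congr
    intro y
    unfold opL
    rw [← lintegral_mul_const]
    · apply lintegral_congr
      intro a
      simp only [MeasurableEquiv.piFinSuccAbove_symm_apply, Fin.insertNthEquiv_apply,
        Fin.insertNth_zero', Fin.cons_zero, Fin.prod_univ_succ, Fin.castSucc_zero,
        Fin.cons_succ, ← Fin.succ_castSucc]
      rw [mul_assoc]
    · have : Measurable fun a : ℝ => kerK a (y 0) :=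
        hk.comp (f := fun a : ℝ => (a, y 0)) (by fun_prop)
      fun_prop

lemma iter_opL (m : ℕ) : opL^[m] hE
    = (Set.Icc (0:ℝ) 1).indicator (fun a => ENNReal.ofReal (itT (fun _ => 1) m a)) := by
  induction m with
  | zero => simp [hE, itT]
  | succ m ih =>
    rw [Function.iterate_succ_apply', ih, opL_indicator (itT_cont continuous_const m)
      (itT_nonneg continuous_const (fun _ _ => zero_le_one) m)]
    rfl

lemma pathG_adj (m : ℕ) (k : Fin m) : (pathG m).Adj k.castSucc k.succ := by
  unfold pathG
  rw [SimpleGraph.fromRel_adj]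
  refine ⟨?_, Or.inl (by simp)⟩
  intro h
  have := congrArg Fin.val h
  simp at this

lemma pathG_adj_cases {m : ℕ} {i j : Fin (m + 1)} (h : (pathG m).Adj i j) :
    (∃ k : Fin m, i = k.castSucc ∧ j = k.succ) ∨ (∃ k : Fin m, j = k.castSucc ∧ i = k.succ) := by
  unfold pathG at h
  rw [SimpleGraph.fromRel_adj] at h
  rcases h.2 with h | h
  · left
    refine ⟨⟨i, by omega⟩, ?_, ?_⟩ <;> ext <;> simp <;> omega
  · right
    refine ⟨⟨j, by omega⟩, ?_, ?_⟩ <;> ext <;> simp <;> omega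

def edgeOf (m : ℕ) (k : Fin m) : (pathG m).edgeSet :=
  ⟨s(k.castSucc, k.succ), (SimpleGraph.mem_edgeSet _).mpr (pathG_adj m k)⟩

lemma edgeOf_bij (m : ℕ) : Function.Bijective (edgeOf m) := by
  constructor
  · intro k l h
    have := congrArg Subtype.val h
    simp only [edgeOf, Sym2.eq_iff] at this
    rcases this with h | h
    · exact Fin.castSucc_injective _ h.1
    · have h1 := congrArg Fin.val h.1
      have h2 := congrArg Fin.val h.2
      simp at h1 h2
      omega
  · rintro ⟨e, he⟩
    induction e with
    | h i j =>
      rcases pathG_adj_cases ((SimpleGraph.mem_edgeSet _).mp he) with ⟨k, rfl, rfl⟩ | ⟨k, rfl, rfl⟩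
      · exact ⟨k, rfl⟩
      · exact ⟨k, Subtype.ext Sym2.eq_swap⟩

lemma mem_QSet_iff (m : ℕ) (x : Fin (m + 1) → ℝ) (y : (pathG m).edgeSet → ℝ) :
    (x, y) ∈ QSet (pathG m) ↔ (∀ i, x i ∈ Set.Icc (0:ℝ) 1) ∧
      ∀ k : Fin m, y (edgeOf m k) ∈ Set.Icc (max 0 (x k.castSucc + x k.succ - 1))
        (min (x k.castSucc) (x k.succ)) := by
  unfold QSet
  simp only [Set.mem_setOf_eq, Set.mem_Icc, max_le_iff, le_min_iff]
  constructor
  · rintro ⟨h1, h2, h3⟩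
    refine ⟨h1, fun k => ?_⟩
    obtain ⟨a, b, c, d⟩ := h3 _ _ (pathG_adj m k)
    exact ⟨⟨a, by unfold edgeOf; linarith⟩, b, c⟩
  · rintro ⟨h1, h2⟩
    refine ⟨h1, fun e => ?_, fun i j h => ?_⟩
    · obtain ⟨k, rfl⟩ := (edgeOf_bij m).2 e
      obtain ⟨⟨a, b⟩, c, d⟩ := h2 k
      exact ⟨a, c.trans (h1 _).2⟩
    · rcases pathG_adj_cases h with ⟨k, rfl, rfl⟩ | ⟨k, rfl, rfl⟩
      · obtain ⟨⟨a, b⟩, c, d⟩ := h2 k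
        unfold edgeOf at a b c d
        exact ⟨a, c, d, by linarith⟩
      · obtain ⟨⟨a, b⟩, c, d⟩ := h2 k
        have : (⟨s(k.succ, k.castSucc), (SimpleGraph.mem_edgeSet _).mpr h⟩ : (pathG m).edgeSet)
          = edgeOf m k := Subtype.ext Sym2.eq_swap
        rw [this]
        exact ⟨a, d, c, by linarith⟩

lemma kerK_eq (a b : ℝ) : min a b - max 0 (a + b - 1) = kerK a b := by
  unfold kerK
  rcases le_total a b with h | h <;> rcases le_total 0 (a + b - 1) with h' | h' <;>
  simp only [h, h', min_eq_left, min_eq_right, max_eq_left, max_eq_right,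
    sub_le_sub_iff_left] <;>
  first
  | (rw [min_eq_left (by linarith)]; linarith)
  | (rw [min_eq_right (by linarith)]; linarith)

lemma slice_volume (m : ℕ) (x : Fin (m + 1) → ℝ) :
    volume (Prod.mk x ⁻¹' QSet (pathG m))
      = hE (x 0) * ∏ k : Fin m, ENNReal.ofReal (kerK (x k.castSucc) (x k.succ)) := by
  by_cases hx : ∀ i, x i ∈ Set.Icc (0:ℝ) 1
  · let E := Equiv.ofBijective _ (edgeOf_bij m)
    have hs : Prod.mk x ⁻¹' QSet (pathG m) = Set.pi Set.univ (fun e : (pathG m).edgeSet =>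
        Set.Icc (max 0 (x (E.symm e).castSucc + x (E.symm e).succ - 1))
        (min (x (E.symm e).castSucc) (x (E.symm e).succ))) := by
      ext y
      rw [Set.mem_preimage, mem_QSet_iff, Set.mem_univ_pi]
      rw [← E.forall_congr_right]
      simp only [Equiv.symm_apply_apply]
      exact and_iff_right hx
    rw [hs, volume_pi_pi, hE, Set.indicator_of_mem (hx 0), one_mul]
    rw [← E.prod_comp]
    simp only [Equiv.symm_apply_apply, Real.volume_Icc, kerK_eq]
  · have hs : Prod.mk x ⁻¹' QSet (pathG m) = ∅ := by
      ext y
      rw [Set.mem_preimage, mem_QSet_iff]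
      exact iff_of_false (fun h => hx h.1) (fun h => h)
    rw [hs, measure_empty]
    symm
    push Not at hx
    obtain ⟨i, hi⟩ := hx
    rw [mul_eq_zero]
    induction i using Fin.cases with
    | zero => left; exact Set.indicator_of_notMem hi _
    | succ k =>
      right
      exact Finset.prod_eq_zero (Finset.mem_univ k) (ENNReal.ofReal_of_nonpos (kerK_neg hi))

lemma QSet_meas (m : ℕ) : MeasurableSet (QSet (pathG m)) := by
  apply IsClosed.measurableSet
  have : QSet (pathG m) = {p | (∀ i, p.1 i ∈ Set.Icc (0:ℝ) 1) ∧
      ∀ k : Fin m, p.2 (edgeOf m k) ∈ Set.Icc (max 0 (p.1 k.castSucc + p.1 k.succ - 1))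
        (min (p.1 k.castSucc) (p.1 k.succ))} := by
    ext ⟨x, y⟩
    exact mem_QSet_iff m x y
  rw [this]
  simp only [Set.mem_Icc, Set.setOf_and, Set.setOf_forall]
  refine IsClosed.inter (isClosed_iInter fun i => IsClosed.inter ?_ ?_)
    (isClosed_iInter fun i => IsClosed.inter ?_ ?_)
  all_goals exact isClosed_le (by fun_prop) (by fun_prop)

lemma volume_QSet (m : ℕ) : (volume (QSet (pathG m))).toReal
    = ∫ a in (0:ℝ)..1, itT (fun _ => 1) m a := by
  have h0 := itT_nonneg continuous_const (f := fun _ => 1) (fun _ _ => zero_le_one) m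
  have h : volume (QSet (pathG m)) = ENNReal.ofReal (∫ a in (0:ℝ)..1, itT (fun _ => 1) m a) := by
    rw [Measure.volume_eq_prod, Measure.prod_apply (QSet_meas m)]
    simp only [slice_volume]
    rw [lintegral_path m hE (measurable_const.indicator measurableSet_Icc), iter_opL,
      lintegral_indicator measurableSet_Icc, intervalIntegral.integral_of_le zero_le_one,
      ← integral_Icc_eq_integral_Ioc, ofReal_integral_eq_lintegral_ofReal]
    · exact (itT_cont continuous_const m).integrableOn_Icc
    · exact (ae_restrict_iff' measurableSet_Icc).mpr (Eventually.of_forall h0)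
  rw [h, ENNReal.toReal_ofReal (intervalIntegral.integral_nonneg zero_le_one h0)]

/-- For `|x| < π/2`, `∑_{m ≥ 0} 2^m * vol Q(P_m) * x^(2m+1) = tan x`. -/
theorem hasSum_volume_QSet_path_tan (x : ℝ) (hx : |x| < Real.pi / 2) :
    HasSum (fun m : ℕ =>
      2 ^ m * (volume (QSet (pathG m))).toReal * x ^ (2 * m + 1)) (Real.tan x) := by
  by_cases hx0 : x = 0
  · subst hx0
    simp
  · have h := (analytic_part x hx hx0).mul_right x
    rw [div_mul_cancel₀ _ hx0] at h
    refine (congrArg (fun g => HasSum g (Real.tan x)) (funext fun m => ?_)).mpr h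
    rw [volume_QSet, mul_pow, ← pow_mul, pow_succ]
    ring
end
end

section
/- For every m >= 3, the number of linear extensions of the incidence poset of the cycle C_m with m edges equals m * A_{2m-1}, where A_{2m-1} is the Euler number counting alternating permutations of {1, ..., 2m-1}. -/
open MeasureTheory Filter

noncomputable section

/-- The cycle `C_m` with `m` vertices and (for `m ≥ 3`) `m` edges. -/
def cycleG (m : ℕ) : SimpleGraph (Fin m) :=
  SimpleGraph.fromRel (fun i j => ((i : ℕ) + 1) % m = (j : ℕ))

instance (m : ℕ) : DecidableRel (cycleG m).Adj := fun i j =>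
  decidable_of_iff _ (SimpleGraph.fromRel_adj _ i j).symm

/-- Cyclic alternating permutations: even positions are peaks, odd positions valleys. -/
def cycAlt (n : ℕ) (g : Equiv.Perm (Fin (2 * n + 1 + 1))) : Prop :=
  ∀ k : Fin (2 * n + 1 + 1), (Even (k : ℕ) → g (k + 1) < g k) ∧ (Odd (k : ℕ) → g k < g (k + 1))

/-- Alternating permutations, as in `eulerNumber`. -/
def altP (k : ℕ) (σ : Equiv.Perm (Fin k)) : Prop :=
  ∀ (i : ℕ) (h : i + 1 < k),
      (Even i → σ ⟨i + 1, h⟩ < σ ⟨i, Nat.lt_of_succ_lt h⟩) ∧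
      (Odd i → σ ⟨i, Nat.lt_of_succ_lt h⟩ < σ ⟨i + 1, h⟩)

lemma parity_add (n : ℕ) (a b : Fin (2 * n + 1 + 1)) :
    ((a + b : Fin (2 * n + 1 + 1)) : ℕ) % 2 = ((a : ℕ) + b) % 2 := by
  rw [Fin.val_add_eq_ite]
  split_ifs <;> omega

lemma parity_sub (n : ℕ) (a b : Fin (2 * n + 1 + 1)) :
    ((a - b : Fin (2 * n + 1 + 1)) : ℕ) % 2 = ((a : ℕ) + b) % 2 := by
  have := parity_add n (a - b) b
  rw [sub_add_cancel] at this
  omega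

/-- The shifted version with a zero in position zero is alternating. -/
lemma dec_alt (n : ℕ) (σ : Equiv.Perm (Fin (2 * n + 1))) :
    altP (2 * n + 1) σ ↔ ∀ k : Fin (2 * n + 1 + 1),
      (Odd (k : ℕ) → Equiv.Perm.decomposeFin.symm (0, σ) (k + 1) <
        Equiv.Perm.decomposeFin.symm (0, σ) k) ∧
      (Even (k : ℕ) → Equiv.Perm.decomposeFin.symm (0, σ) k <
        Equiv.Perm.decomposeFin.symm (0, σ) (k + 1)) := by
  have key : ∀ (i : ℕ) (h : i + 1 < 2 * n + 1),
      ((⟨i, Nat.lt_of_succ_lt h⟩ : Fin (2 * n + 1)).succ + 1) = (⟨i + 1, h⟩ : Fin (2 * n + 1)).succ := by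
    intro i h
    ext
    rw [Fin.val_add_eq_ite]
    simp
    omega
  constructor
  · intro H k
    refine Fin.cases ?_ (fun j => ?_) k
    · refine ⟨fun h => by simp at h, fun _ => ?_⟩
      have : (0 : Fin (2 * n + 1 + 1)) + 1 = (0 : Fin (2 * n + 1)).succ := by simp
      rw [this, Equiv.Perm.decomposeFin_symm_apply_zero, Equiv.Perm.decomposeFin_symm_apply_succ]
      simp
    · obtain ⟨j, hj⟩ := j
      by_cases h : j + 1 < 2 * n + 1
      · rw [key j h, Equiv.Perm.decomposeFin_symm_apply_succ, Equiv.Perm.decomposeFin_symm_apply_succ]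
        have := H j h
        simp only [Equiv.swap_self, Equiv.refl_apply, Fin.succ_lt_succ_iff, Fin.val_succ,
          Nat.odd_add_one, Nat.even_add_one, Nat.not_odd_iff_even, Nat.not_even_iff_odd]
        exact this
      · have hj' : j = 2 * n := by omega
        subst hj'
        have : ((⟨2 * n, hj⟩ : Fin (2 * n + 1)).succ + 1) = 0 := by
          ext
          rw [Fin.val_add_eq_ite]
          simp
        rw [this, Equiv.Perm.decomposeFin_symm_apply_zero, Equiv.Perm.decomposeFin_symm_apply_succ]
        refine ⟨fun _ => by simp, fun h => ?_⟩
        simp [Nat.even_add_one] at h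
  · intro H i h
    have := H (⟨i, Nat.lt_of_succ_lt h⟩ : Fin (2 * n + 1)).succ
    rw [key i h, Equiv.Perm.decomposeFin_symm_apply_succ, Equiv.Perm.decomposeFin_symm_apply_succ] at this
    simpa only [Equiv.swap_self, Equiv.refl_apply, Fin.succ_lt_succ_iff, Fin.val_succ,
          Nat.odd_add_one, Nat.even_add_one, Nat.not_odd_iff_even, Nat.not_even_iff_odd] using this

/-- The odd position `2 c + 1`. -/
def oddPos (n : ℕ) (c : Fin (n + 1)) : Fin (2 * n + 1 + 1) := ⟨2 * c + 1, by omega⟩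

/-- Rotation of the extended permutation. -/
def rot (n : ℕ) (c : Fin (n + 1)) (σ : Equiv.Perm (Fin (2 * n + 1))) :
    Equiv.Perm (Fin (2 * n + 1 + 1)) :=
  (Equiv.subRight (oddPos n c)).trans (Equiv.Perm.decomposeFin.symm (0, σ))

lemma rot_apply (n : ℕ) (c : Fin (n + 1)) (σ : Equiv.Perm (Fin (2 * n + 1)))
    (k : Fin (2 * n + 1 + 1)) :
    rot n c σ k = Equiv.Perm.decomposeFin.symm (0, σ) (k - oddPos n c) := rfl

lemma rot_alt (n : ℕ) (c : Fin (n + 1)) (σ : Equiv.Perm (Fin (2 * n + 1))) :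
    cycAlt n (rot n c σ) ↔ altP (2 * n + 1) σ := by
  rw [dec_alt]
  have hc : ((oddPos n c : Fin _) : ℕ) % 2 = 1 := by simp [oddPos]
  constructor
  · intro H k
    have h := H (k + oddPos n c)
    have hp := parity_add n k (oddPos n c)
    rw [rot_apply, rot_apply] at h
    have e1 : k + oddPos n c + 1 - oddPos n c = k + 1 := by abel
    rw [e1, add_sub_cancel_right] at h
    rw [Nat.even_iff, Nat.odd_iff] at h ⊢
    exact ⟨fun hk => h.1 (by omega), fun hk => h.2 (by omega)⟩
  · intro H k
    have h := H (k - oddPos n c)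
    have hp := parity_sub n k (oddPos n c)
    rw [rot_apply, rot_apply]
    have e1 : k + 1 - oddPos n c = k - oddPos n c + 1 := by abel
    rw [e1]
    rw [Nat.even_iff, Nat.odd_iff] at h ⊢
    exact ⟨fun hk => h.1 (by omega), fun hk => h.2 (by omega)⟩

lemma card_cycAlt (n : ℕ) :
    Nat.card {g : Equiv.Perm (Fin (2 * n + 1 + 1)) // cycAlt n g} =
      (n + 1) * eulerNumber (2 * n + 1) := by
  have : eulerNumber (2 * n + 1) = Nat.card {σ : Equiv.Perm (Fin (2 * n + 1)) // altP _ σ} := rfl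
  rw [this]
  have h2 : n + 1 = Nat.card (Fin (n + 1)) := by simp
  conv_rhs => rw [h2, ← Nat.card_prod]
  symm
  refine Nat.card_congr (Equiv.ofBijective
    (fun p => ⟨rot n p.1 p.2.1, (rot_alt n _ _).2 p.2.2⟩) ⟨?_, ?_⟩)
  · rintro ⟨c, σ, hσ⟩ ⟨d, τ, hτ⟩ h
    simp only [Subtype.mk.injEq] at h
    have z : ∀ c σ, rot n c σ (oddPos n c) = 0 := by
      intro c σ
      rw [rot_apply, sub_self, Equiv.Perm.decomposeFin_symm_apply_zero]
    have hcd : c = d := by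
      have h1 := z c σ
      rw [h, ← z d τ] at h1
      have h1 := (rot n d τ).injective h1
      simp only [oddPos, Fin.mk.injEq] at h1
      ext
      omega
    subst hcd
    have : Equiv.Perm.decomposeFin.symm ((0 : Fin (2 * n + 1 + 1)), σ) = Equiv.Perm.decomposeFin.symm (0, τ) := by
      ext1 k
      have := congrArg (fun g : Equiv.Perm _ => g (k + oddPos n c)) h
      simpa only [rot_apply, add_sub_cancel_right] using this
    have := Equiv.Perm.decomposeFin.symm.injective this
    simp only [Prod.mk.injEq, true_and] at this
    subst this
    rfl
  · rintro ⟨g, hg⟩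
    have hk : ((g.symm 0 : Fin _) : ℕ) % 2 = 1 := by
      by_contra hne
      have := (hg (g.symm 0)).1 (by rw [Nat.even_iff]; omega)
      simp at this
    have hlt := (g.symm 0).isLt
    let c : Fin (n + 1) := ⟨(g.symm 0 : Fin _) / 2, by omega⟩
    have hc : oddPos n c = g.symm 0 := by
      ext
      simp only [oddPos, c]
      omega
    let h : Equiv.Perm (Fin (2 * n + 1 + 1)) := (Equiv.addRight (oddPos n c)).trans g
    have h0 : h 0 = 0 := by simp [h, hc]
    obtain ⟨⟨p, σ⟩, hpσ⟩ := Equiv.Perm.decomposeFin.symm.surjective h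
    have hp : p = 0 := by
      rw [← hpσ, Equiv.Perm.decomposeFin_symm_apply_zero] at h0
      exact h0
    subst hp
    have hr : rot n c σ = g := by
      ext1 k
      rw [rot_apply, hpσ]
      simp [h]
    exact ⟨(c, ⟨σ, (rot_alt n c σ).1 (hr ▸ hg)⟩), Subtype.ext hr⟩

lemma cycle_adj (n : ℕ) (hn : 2 ≤ n) (i j : Fin (n + 1)) :
    (cycleG (n + 1)).Adj i j ↔ (i + 1 = j ∨ j + 1 = i) := by
  have key : ∀ i j : Fin (n + 1), ((i : ℕ) + 1) % (n + 1) = (j : ℕ) ↔ i + 1 = j := by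
    intro i j
    rw [Fin.ext_iff, Fin.val_add]
    simp
  have hne : ∀ i : Fin (n + 1), i + 1 ≠ i := by
    intro i h
    have : (1 : Fin (n + 1)) = 0 := by simpa using h
    have := congrArg Fin.val this
    rw [Fin.val_one', Nat.mod_eq_of_lt (by omega)] at this
    simp at this
  unfold cycleG
  rw [SimpleGraph.fromRel_adj, key, key]
  constructor
  · exact fun h => h.2
  · intro h
    refine ⟨?_, h⟩
    rintro rfl
    rcases h with h | h <;> exact hne _ h

/-- The edges of the cycle. -/
def edgeEquiv (n : ℕ) (hn : 2 ≤ n) : Fin (n + 1) ≃ (cycleG (n + 1)).edgeSet :=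
  Equiv.ofBijective (fun i => ⟨s(i, i + 1), by
    rw [SimpleGraph.mem_edgeSet, cycle_adj n hn]; exact Or.inl rfl⟩) (by
    constructor
    · intro i j h
      simp only [Subtype.mk.injEq, Sym2.eq_iff] at h
      rcases h with h | ⟨h1, h2⟩
      · exact h.1
      · exfalso
        have h3 : j + (1 + 1) = j := by rw [← add_assoc, ← h1, h2]
        have h3 : (1 + 1 : Fin (n + 1)) = 0 := by simpa using h3
        have h4 := congrArg Fin.val h3
        rw [Fin.val_add, Fin.val_one', Nat.mod_eq_of_lt (show 1 < n + 1 by omega),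
          Nat.mod_eq_of_lt (by omega)] at h4
        simp at h4
    · rintro ⟨e, he⟩
      induction e using Sym2.ind with
      | _ x y =>
        rw [SimpleGraph.mem_edgeSet, cycle_adj n hn] at he
        rcases he with rfl | rfl
        · exact ⟨x, rfl⟩
        · exact ⟨y, Subtype.ext Sym2.eq_swap⟩)

lemma edgeEquiv_val (n : ℕ) (hn : 2 ≤ n) (i : Fin (n + 1)) :
    ((edgeEquiv n hn i : (cycleG (n + 1)).edgeSet) : Sym2 (Fin (n + 1))) = s(i, i + 1) := rfl

/-- The even position `2 c`. -/
def evenPos (n : ℕ) (c : Fin (n + 1)) : Fin (2 * n + 1 + 1) := ⟨2 * c, by omega⟩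

/-- Vertices go to even positions, edges to odd positions. -/
def posEquiv (n : ℕ) : Fin (n + 1) ⊕ Fin (n + 1) ≃ Fin (2 * n + 1 + 1) :=
  Equiv.ofBijective (Sum.elim (evenPos n) (oddPos n)) (by
    constructor
    · rintro (a | a) (b | b) h <;>
        simp only [Sum.elim_inl, Sum.elim_inr, evenPos, oddPos, Fin.mk.injEq] at h
      · congr 1; ext; omega
      · omega
      · omega
      · congr 1; ext; omega
    · intro k
      rcases Nat.mod_two_eq_zero_or_one (k : ℕ) with h | h
      · exact ⟨Sum.inl ⟨k / 2, by omega⟩, by ext; simp [evenPos]; omega⟩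
      · exact ⟨Sum.inr ⟨k / 2, by omega⟩, by ext; simp [oddPos]; omega⟩)

lemma even_succ (n : ℕ) (c : Fin (n + 1)) : evenPos n c + 1 = oddPos n c := by
  ext
  have := c.isLt
  rw [Fin.val_add_eq_ite]
  simp [evenPos, oddPos]
  omega

lemma odd_succ (n : ℕ) (c : Fin (n + 1)) : oddPos n c + 1 = evenPos n (c + 1) := by
  ext
  have := c.isLt
  rcases Nat.eq_zero_or_pos n with rfl | hn
  · simp [evenPos, oddPos, Fin.val_add_eq_ite]
  have h1 : ((1 : Fin (n + 1)) : ℕ) = 1 := by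
    rw [Fin.val_one', Nat.mod_eq_of_lt (by omega)]
  have h2 : ((1 : Fin (2 * n + 1 + 1)) : ℕ) = 1 := by
    rw [Fin.val_one', Nat.mod_eq_of_lt (by omega)]
  have a1 := Fin.val_add_eq_ite (oddPos n c) 1
  have a2 := Fin.val_add_eq_ite c 1
  have a3 : ((evenPos n (c + 1) : Fin _) : ℕ) = 2 * ((c + 1 : Fin (n + 1)) : ℕ) := rfl
  have a4 : ((oddPos n c : Fin _) : ℕ) = 2 * (c : ℕ) + 1 := rfl
  rw [h2, a4] at a1
  rw [h1] at a2
  rw [a1, a3, a2]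
  split_ifs <;> omega

lemma cycAlt_iff (n : ℕ) (g : Equiv.Perm (Fin (2 * n + 1 + 1))) :
    cycAlt n g ↔ ∀ c : Fin (n + 1), g (oddPos n c) < g (evenPos n c) ∧
      g (oddPos n c) < g (evenPos n (c + 1)) := by
  constructor
  · intro H c
    have h1 := (H (evenPos n c)).1 (by simp [evenPos])
    have h2 := (H (oddPos n c)).2 (by simp [oddPos])
    rw [even_succ] at h1
    rw [odd_succ] at h2
    exact ⟨h1, h2⟩
  · intro H k
    obtain ⟨x, rfl⟩ := (posEquiv n).surjective k
    rcases x with c | c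
    · change (Even ((evenPos n c : Fin _) : ℕ) → g (evenPos n c + 1) < g (evenPos n c)) ∧
        (Odd ((evenPos n c : Fin _) : ℕ) → g (evenPos n c) < g (evenPos n c + 1))
      rw [even_succ]
      exact ⟨fun _ => (H c).1, fun h => by rw [Nat.odd_iff] at h; simp [evenPos] at h⟩
    · change (Even ((oddPos n c : Fin _) : ℕ) → g (oddPos n c + 1) < g (oddPos n c)) ∧
        (Odd ((oddPos n c : Fin _) : ℕ) → g (oddPos n c) < g (oddPos n c + 1))
      rw [odd_succ]
      exact ⟨fun h => by simp [oddPos, Nat.even_add_one] at h, fun _ => (H c).2⟩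

/-- Kreweras: the incidence poset of the cycle `C_m` has `m * A_{2m-1}` linear
extensions. -/
theorem incLinExt_cycle (m : ℕ) (hm : 3 ≤ m) :
    incLinExt (cycleG m) = m * eulerNumber (2 * m - 1) := by
  obtain ⟨n, rfl⟩ : ∃ n, m = n + 1 := ⟨m - 1, by omega⟩
  have hn : 2 ≤ n := by omega
  have e1 : 2 * (n + 1) - 1 = 2 * n + 1 := by omega
  rw [e1, ← card_cycAlt]
  unfold incLinExt
  have hE : Fintype.card (cycleG (n + 1)).edgeSet = n + 1 := by
    rw [← Fintype.card_congr (edgeEquiv n hn), Fintype.card_fin]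
  have hN : Fintype.card (Fin (n + 1)) + Fintype.card (cycleG (n + 1)).edgeSet = 2 * n + 1 + 1 := by
    rw [hE, Fintype.card_fin]; omega
  let P : Fin (n + 1) ⊕ (cycleG (n + 1)).edgeSet ≃ Fin (2 * n + 1 + 1) :=
    (Equiv.sumCongr (Equiv.refl _) (edgeEquiv n hn).symm).trans (posEquiv n)
  have hP1 : ∀ c, P.symm (evenPos n c) = Sum.inl c := by
    intro c
    rw [Equiv.symm_apply_eq]
    rfl
  have hP2 : ∀ c, P.symm (oddPos n c) = Sum.inr (edgeEquiv n hn c) := by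
    intro c
    rw [Equiv.symm_apply_eq]
    simp only [P, Equiv.trans_apply, Equiv.sumCongr_apply, Sum.map_inr, Equiv.symm_apply_apply]
    rfl
  refine Nat.card_congr (Equiv.subtypeEquiv (Equiv.equivCongr P (finCongr hN)) ?_)
  intro f
  rw [cycAlt_iff]
  have hv : ∀ k, Equiv.equivCongr P (finCongr hN) f k = Fin.cast hN (f (P.symm k)) := fun k => rfl
  simp only [hv, hP1, hP2, Fin.cast_lt_cast]
  constructor
  · intro H c
    exact ⟨H _ _ (by rw [edgeEquiv_val]; simp), H _ _ (by rw [edgeEquiv_val]; simp)⟩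
  · intro H e i hi
    obtain ⟨c, rfl⟩ := (edgeEquiv n hn).surjective e
    rw [edgeEquiv_val, Sym2.mem_iff] at hi
    rcases hi with rfl | rfl
    · exact (H _).1
    · exact (H _).2
end
end

section
/- For every m >= 3, the 2m-dimensional Lebesgue volume of Q(C_m) equals one quarter of the (2m-1)-dimensional Lebesgue volume of Q(P_{m-1}). -/
open MeasureTheory Filter

noncomputable section

/-- Lebesgue measure on the unit interval. -/
def muI : Measure ℝ := volume.restrict (Set.Icc 0 1)

instance : IsFiniteMeasure muI := by unfold muI; infer_instance

lemma muI_pi {ι : Type*} [Fintype ι] : (Measure.pi fun _ : ι => muI) =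
    volume.restrict (Set.pi Set.univ fun _ : ι => Set.Icc (0:ℝ) 1) := by
  unfold muI
  rw [volume_pi, Measure.restrict_pi_pi]

lemma muI_Ici (a : ℝ) : muI (Set.Ici a) = ENNReal.ofReal (1 - max a 0) := by
  unfold muI
  rw [Measure.restrict_apply measurableSet_Ici]
  have : Set.Ici a ∩ Set.Icc 0 1 = Set.Icc (max a 0) 1 := by
    ext x; simp; tauto
  rw [this, Real.volume_Icc]

lemma muI_Iic (a : ℝ) (h : a ≤ 1) : muI (Set.Iic a) = ENNReal.ofReal a := by
  unfold muI
  rw [Measure.restrict_apply measurableSet_Iic]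
  have : Set.Iic a ∩ Set.Icc 0 1 = Set.Icc 0 a := by
    ext x; simp; constructor
    · tauto
    · intro h; refine ⟨h.2, h.1, by linarith⟩
  rw [this, Real.volume_Icc, sub_zero]

/-- The tent map. -/
def tent (x : ℝ) : ℝ := 2 * min x (1 - x)

lemma tent_meas : Measurable tent := by unfold tent; fun_prop

lemma tent_mp : MeasurePreserving tent muI muI := by
  refine ⟨tent_meas, ?_⟩
  have : IsFiniteMeasure (Measure.map tent muI) := Measure.isFiniteMeasure_map _ _
  refine Measure.ext_of_Ici _ _ fun a => ?_
  rw [Measure.map_apply tent_meas measurableSet_Ici, muI_Ici]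
  unfold muI
  rw [Measure.restrict_apply (tent_meas measurableSet_Ici)]
  have : tent ⁻¹' Set.Ici a ∩ Set.Icc 0 1 = Set.Icc (max a 0 / 2) (1 - max a 0 / 2) := by
    ext x
    simp only [Set.mem_inter_iff, Set.mem_preimage, Set.mem_Ici, Set.mem_Icc, tent]
    rcases le_total x (1 - x) with h | h <;> rcases le_total a 0 with h' | h' <;>
      simp only [h, h', min_eq_left, min_eq_right, max_eq_left, max_eq_right] <;>
      constructor <;> intro h <;> refine ⟨?_, ?_⟩ <;> (try constructor) <;> linarith [h.1, h.2]
  rw [this, Real.volume_Icc]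
  congr 1; ring

lemma refl_mp : MeasurePreserving (fun x : ℝ => 1 - x) muI muI := by
  have hm : Measurable (fun x : ℝ => 1 - x) := by fun_prop
  refine ⟨hm, ?_⟩
  have : IsFiniteMeasure (Measure.map (fun x : ℝ => 1 - x) muI) :=
    Measure.isFiniteMeasure_map _ _
  refine Measure.ext_of_Ici _ _ fun a => ?_
  rw [Measure.map_apply hm measurableSet_Ici, muI_Ici]
  unfold muI
  rw [Measure.restrict_apply (hm measurableSet_Ici)]
  have : (fun x : ℝ => 1 - x) ⁻¹' Set.Ici a ∩ Set.Icc 0 1 = Set.Icc 0 (1 - max a 0) := by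
    ext x
    simp only [Set.mem_inter_iff, Set.mem_preimage, Set.mem_Ici, Set.mem_Icc]
    rcases le_total a 0 with h' | h' <;>
      simp only [h', max_eq_left, max_eq_right] <;>
      constructor <;> intro h <;> refine ⟨?_, ?_⟩ <;> (try constructor) <;>
      linarith [h.1, h.2]
  rw [this, Real.volume_Icc]
  congr 1; ring

lemma ae_cube {ι : Type*} [Fintype ι] :
    ∀ᵐ x ∂(Measure.pi fun _ : ι => muI), ∀ i, x i ∈ Set.Icc (0:ℝ) 1 := by
  rw [muI_pi]
  filter_upwards [ae_restrict_mem (MeasurableSet.univ_pi fun _ => measurableSet_Icc)] with x hx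
  exact fun i => hx i trivial

lemma QSet_meas_s10 {V : Type*} [Fintype V] (G : SimpleGraph V) [Fintype G.edgeSet] :
    MeasurableSet (QSet G) := by
  apply IsClosed.measurableSet
  unfold QSet
  simp only [Set.ofPred_and, Set.ofPred_forall, Set.mem_Icc]
  refine IsClosed.inter ?_ (IsClosed.inter ?_ ?_)
  · exact isClosed_iInter fun i => (isClosed_le (by fun_prop) (by fun_prop)).inter
      (isClosed_le (by fun_prop) (by fun_prop))
  · exact isClosed_iInter fun i => (isClosed_le (by fun_prop) (by fun_prop)).inter
      (isClosed_le (by fun_prop) (by fun_prop))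
  · refine isClosed_iInter fun i => isClosed_iInter fun j => isClosed_iInter fun h => ?_
    exact (isClosed_le (by fun_prop) (by fun_prop)).inter <|
      (isClosed_le (by fun_prop) (by fun_prop)).inter <|
      (isClosed_le (by fun_prop) (by fun_prop)).inter
      (isClosed_le (by fun_prop) (by fun_prop))

lemma vol_QSet {V ι : Type*} [Fintype V] [Fintype ι] (G : SimpleGraph V) [Fintype G.edgeSet]
    (φ : ι ≃ G.edgeSet) (a b : ι → V) (hφ : ∀ k, (φ k : Sym2 V) = s(a k, b k)) :
    volume (QSet G) = ∫⁻ x, ∏ k, ENNReal.ofReal (min (x (a k)) (x (b k)) / 2)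
      ∂(Measure.pi fun _ : V => muI) := by
  have h1 : (∫⁻ x, ∏ k, ENNReal.ofReal (min (x (a k)) (x (b k)) / 2)
      ∂(Measure.pi fun _ : V => muI)) =
      ∫⁻ x, ∏ k, ENNReal.ofReal (min (tent (x (a k))) (tent (x (b k))) / 2)
      ∂(Measure.pi fun _ : V => muI) := by
    have := measurePreserving_pi (fun _ : V => muI) (fun _ => muI) (fun _ => tent_mp)
    rw [← this.lintegral_comp]
    fun_prop
  rw [h1, Measure.volume_eq_prod, Measure.prod_apply (QSet_meas_s10 G), muI_pi,
    ← lintegral_indicator (MeasurableSet.univ_pi fun _ => measurableSet_Icc)]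
  congr 1
  ext x
  by_cases hx : x ∈ Set.pi Set.univ fun _ : V => Set.Icc (0:ℝ) 1
  · rw [Set.indicator_of_mem hx]
    have hs : Prod.mk x ⁻¹' QSet G = Set.pi Set.univ fun e =>
        Set.Icc (max 0 (x (a (φ.symm e)) + x (b (φ.symm e)) - 1))
          (min (x (a (φ.symm e))) (x (b (φ.symm e)))) := by
      ext y
      simp only [Set.mem_preimage, QSet, Set.mem_ofPred_eq, Set.mem_pi, Set.mem_univ, true_imp_iff,
        Set.mem_Icc, max_le_iff, le_min_iff] at hx ⊢
      constructor
      · rintro ⟨-, -, h⟩ e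
        obtain ⟨k, rfl⟩ := φ.surjective e
        rw [Equiv.symm_apply_apply]
        have hA : G.Adj (a k) (b k) := by
          rw [← SimpleGraph.mem_edgeSet, ← hφ]; exact (φ k).2
        have h2 := h _ _ hA
        have h3 : (⟨s(a k, b k), (SimpleGraph.mem_edgeSet _).mpr hA⟩ : G.edgeSet) = φ k :=
          Subtype.ext (hφ k).symm
        rw [h3] at h2
        refine ⟨⟨h2.1, by linarith⟩, h2.2.1, h2.2.2.1⟩
      · intro h
        refine ⟨hx, fun e => ⟨(h e).1.1, (h e).2.1.trans (hx _).2⟩, fun i j hA => ?_⟩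
        have h2 := h ⟨s(i, j), (SimpleGraph.mem_edgeSet _).mpr hA⟩
        generalize hk : φ.symm ⟨s(i, j), (SimpleGraph.mem_edgeSet _).mpr hA⟩ = k at h2
        have h3 := hφ k
        rw [← hk, Equiv.apply_symm_apply, hk] at h3
        rcases Sym2.eq_iff.mp h3 with ⟨e1, e2⟩ | ⟨e1, e2⟩ <;> rw [← e1, ← e2] at h2 <;>
          refine ⟨h2.1.1, ?_, ?_, ?_⟩ <;> linarith [h2.1.2, h2.2.1, h2.2.2]
    rw [hs, volume_pi_pi, ← Equiv.prod_comp φ]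
    refine Finset.prod_congr rfl fun k _ => ?_
    rw [Equiv.symm_apply_apply, Real.volume_Icc]
    congr 1
    unfold tent
    generalize x (a k) = p
    generalize x (b k) = q
    grind
  · rw [Set.indicator_of_notMem hx]
    have : Prod.mk x ⁻¹' QSet G = ∅ := by
      ext y
      simp only [Set.mem_preimage, QSet, Set.mem_ofPred_eq, Set.mem_empty_iff_false, iff_false]
      intro h
      exact hx fun i _ => h.1 i
    rw [this, measure_empty]

/-- product along the path -/
def pp {k : ℕ} (u : Fin (k+1) → ℝ) : ENNReal :=
  ∏ i : Fin k, ENNReal.ofReal (min (u i.castSucc) (u i.succ))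

lemma pp_meas {k : ℕ} : Measurable (pp (k := k)) := by unfold pp; fun_prop

lemma vol_path (n : ℕ) : volume (QSet (pathG n)) =
    (ENNReal.ofReal (1/2))^n * ∫⁻ x, pp x ∂(Measure.pi fun _ : Fin (n+1) => muI) := by
  have hA : ∀ i : Fin n, (pathG n).Adj i.castSucc i.succ := by
    intro i
    simp [pathG, SimpleGraph.fromRel_adj, Fin.ext_iff]
  let f : Fin n → (pathG n).edgeSet := fun i => ⟨s(i.castSucc, i.succ), hA i⟩
  have hf : Function.Bijective f := by
    constructor
    · intro i j h
      have h := Sym2.eq_iff.mp (congrArg Subtype.val h)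
      simp only [Fin.ext_iff, Fin.val_castSucc, Fin.val_succ] at h
      ext; omega
    · rintro ⟨e, he⟩
      induction e using Sym2.ind with
      | _ i j =>
        rw [SimpleGraph.mem_edgeSet, pathG, SimpleGraph.fromRel_adj] at he
        rcases he.2 with h | h
        · refine ⟨⟨i, by omega⟩, ?_⟩
          apply Subtype.ext
          refine Sym2.eq_iff.mpr (Or.inl ⟨?_, ?_⟩) <;> ext <;> simp [h]
        · refine ⟨⟨j, by omega⟩, ?_⟩
          apply Subtype.ext
          refine Sym2.eq_iff.mpr (Or.inr ⟨?_, ?_⟩) <;> ext <;> simp [h]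
  rw [vol_QSet (pathG n) (Equiv.ofBijective f hf) Fin.castSucc Fin.succ (fun k => rfl),
    ← lintegral_const_mul _ pp_meas]
  congr 1; ext x
  unfold pp
  have : (ENNReal.ofReal (1/2))^n = ∏ i : Fin n, ENNReal.ofReal (1/2) := by simp
  rw [this, ← Finset.prod_mul_distrib]
  refine Finset.prod_congr rfl fun k _ => ?_
  rw [← ENNReal.ofReal_mul (by norm_num)]
  congr 1; ring

/-- product along the cycle -/
def cp {k : ℕ} (u : Fin (k+1) → ℝ) : ENNReal :=
  ∏ i : Fin (k+1), ENNReal.ofReal (min (u i) (u (i+1)))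

lemma cp_meas {k : ℕ} : Measurable (cp (k := k)) := by unfold cp; fun_prop

lemma vol_cycle (n : ℕ) (hn : 2 ≤ n) : volume (QSet (cycleG (n+1))) =
    (ENNReal.ofReal (1/2))^(n+1) * ∫⁻ x, cp x ∂(Measure.pi fun _ : Fin (n+1) => muI) := by
  have hv : ∀ i : Fin (n+1), ((i+1 : Fin (n+1)) : ℕ) = (i+1) % (n+1) := by
    intro i; rw [Fin.val_add, Fin.val_one', Nat.add_mod_mod]
  have hmod : ∀ i : ℕ, i < n+1 → (i+1) % (n+1) = if i = n then 0 else i + 1 := by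
    intro i hi
    split_ifs with h
    · simp [h]
    · exact Nat.mod_eq_of_lt (by omega)
  have hA : ∀ i : Fin (n+1), (cycleG (n+1)).Adj i (i+1) := by
    intro i
    rw [cycleG, SimpleGraph.fromRel_adj]
    refine ⟨?_, Or.inl (hv i).symm⟩
    rw [Ne, Fin.ext_iff, hv, hmod i i.2]
    split_ifs <;> omega
  let f : Fin (n+1) → (cycleG (n+1)).edgeSet := fun i => ⟨s(i, i+1), hA i⟩
  have hf : Function.Bijective f := by
    constructor
    · intro i j h
      have h := Sym2.eq_iff.mp (congrArg Subtype.val h)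
      simp only [Fin.ext_iff, hv] at h
      rw [hmod i i.2, hmod j j.2] at h
      ext
      split_ifs at h <;> omega
    · rintro ⟨e, he⟩
      induction e using Sym2.ind with
      | _ i j =>
        rw [SimpleGraph.mem_edgeSet, cycleG, SimpleGraph.fromRel_adj] at he
        rcases he.2 with h | h
        · refine ⟨i, Subtype.ext (Sym2.eq_iff.mpr (Or.inl ⟨rfl, ?_⟩))⟩
          ext; rw [hv, h]
        · refine ⟨j, Subtype.ext (Sym2.eq_iff.mpr (Or.inr ⟨rfl, ?_⟩))⟩
          ext; rw [hv, h]
  rw [vol_QSet (cycleG (n+1)) (Equiv.ofBijective f hf) id (fun i => i + 1) (fun k => rfl),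
    ← lintegral_const_mul _ cp_meas]
  congr 1; ext x
  unfold cp
  have : (ENNReal.ofReal (1/2))^(n+1) = ∏ i : Fin (n+1), ENNReal.ofReal (1/2) := by simp
  rw [this, ← Finset.prod_mul_distrib]
  refine Finset.prod_congr rfl fun k _ => ?_
  rw [← ENNReal.ofReal_mul (by norm_num)]
  congr 1; simp only [id]; ring

/-- reduced integrand -/
def hh {k : ℕ} (v : Fin (k+1) → ℝ) : ENNReal :=
  ENNReal.ofReal (v 0) * (pp v * ENNReal.ofReal (v (Fin.last k)))

lemma hh_meas {k : ℕ} : Measurable (hh (k := k)) := by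
  unfold hh
  have := pp_meas (k := k)
  fun_prop

/-- The bipartite duality step. -/
lemma dual_step (k : ℕ) : ∫⁻ u, hh u ∂(Measure.pi fun _ : Fin (k+1) => muI) =
    ∫⁻ t, pp t ∂(Measure.pi fun _ : Fin (k+2) => muI) := by
  let S : Set ((Fin (k+1) → ℝ) × (Fin (k+2) → ℝ)) :=
    {p | ∀ i : Fin (k+1), p.2 i.castSucc ≤ p.1 i ∧ p.2 i.succ ≤ p.1 i}
  have hS : MeasurableSet S := by
    apply IsClosed.measurableSet
    simp only [S, Set.ofPred_and, Set.ofPred_forall]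
    exact isClosed_iInter fun i => (isClosed_le (by fun_prop) (by fun_prop)).inter
      (isClosed_le (by fun_prop) (by fun_prop))
  have e1 : ((Measure.pi fun _ : Fin (k+1) => muI).prod (Measure.pi fun _ : Fin (k+2) => muI)) S
      = ∫⁻ u, hh u ∂(Measure.pi fun _ : Fin (k+1) => muI) := by
    rw [Measure.prod_apply hS]
    apply lintegral_congr_ae
    filter_upwards [ae_cube] with u hu
    let w : Fin (k+2) → ℝ := Fin.cons (u 0)
      (Fin.snoc (α := fun _ => ℝ) (fun i : Fin k => min (u i.castSucc) (u i.succ)) (u (Fin.last k)))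
    have hs : Prod.mk u ⁻¹' S = Set.pi Set.univ fun j => Set.Iic (w j) := by
      ext t
      simp only [S, Set.mem_preimage, Set.mem_ofPred_eq, Set.mem_pi, Set.mem_univ, true_imp_iff,
        Set.mem_Iic]
      rw [Fin.forall_fin_succ (P := fun j => t j ≤ w j),
        Fin.forall_fin_succ' (P := fun j : Fin (k+1) => t j.succ ≤ w j.succ), forall_and,
        Fin.forall_fin_succ (P := fun j : Fin (k+1) => t j.castSucc ≤ u j),
        Fin.forall_fin_succ' (P := fun j : Fin (k+1) => t j.succ ≤ u j)]
      simp only [w, Fin.cons_zero, Fin.cons_succ, Fin.snoc_castSucc, Fin.snoc_last, le_min_iff,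
        forall_and, Fin.castSucc_zero, ← Fin.succ_castSucc]
      tauto
    rw [hs, Measure.pi_pi]
    have hw : ∀ j, w j ≤ 1 := by
      intro j
      refine Fin.cases ?_ (fun j => ?_) j
      · exact (hu _).2
      · refine Fin.lastCases ?_ (fun j => ?_) j
        · simp [w]; exact (hu _).2
        · simp [w]; exact Or.inl (hu _).2
    simp only [muI_Iic _ (hw _)]
    rw [Fin.prod_univ_succ, Fin.prod_univ_castSucc]
    simp [w, hh, pp]
  have e2 : ((Measure.pi fun _ : Fin (k+1) => muI).prod (Measure.pi fun _ : Fin (k+2) => muI)) S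
      = ∫⁻ t, pp t ∂(Measure.pi fun _ : Fin (k+2) => muI) := by
    have := measurePreserving_pi (fun _ : Fin (k+2) => muI) (fun _ => muI) (fun _ => refl_mp)
    rw [Measure.prod_apply_symm hS, ← this.lintegral_comp pp_meas]
    apply lintegral_congr_ae
    filter_upwards [ae_cube] with t ht
    have hs : (fun u => (u, t)) ⁻¹' S =
        Set.pi Set.univ fun i : Fin (k+1) => Set.Ici (max (t i.castSucc) (t i.succ)) := by
      ext u
      simp [S, Pi.le_def]
    rw [hs, Measure.pi_pi]
    unfold pp
    refine Finset.prod_congr rfl fun i _ => ?_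
    rw [muI_Ici]
    congr 1
    have := (ht i.castSucc).1
    have := (ht i.succ).1
    grind
  rw [← e1, e2]

lemma hh_smul {k : ℕ} {s : ℝ} (hs : 0 ≤ s) (v : Fin (k+1) → ℝ) :
    hh (s • v) = ENNReal.ofReal (s ^ (k+2)) * hh v := by
  have hp : pp (s • v) = ENNReal.ofReal s ^ k * pp v := by
    unfold pp
    have : (ENNReal.ofReal s)^k = ∏ i : Fin k, ENNReal.ofReal s := by simp
    rw [this, ← Finset.prod_mul_distrib]
    refine Finset.prod_congr rfl fun i _ => ?_
    rw [← ENNReal.ofReal_mul hs, mul_min_of_nonneg _ _ hs]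
    rfl
  unfold hh
  rw [hp]
  simp only [Pi.smul_apply, smul_eq_mul, ENNReal.ofReal_mul hs, ENNReal.ofReal_pow hs]
  ring

lemma cube_meas {ι : Type*} [Fintype ι] (s : ℝ) :
    MeasurableSet (Set.pi Set.univ fun _ : ι => Set.Icc (0:ℝ) s) :=
  MeasurableSet.univ_pi fun _ => measurableSet_Icc

lemma box_meas {k : ℕ} (s : ℝ) : MeasurableSet {v : Fin (k+1) → ℝ | ∀ j, v j ≤ s} := by
  apply IsClosed.measurableSet
  simp only [Set.ofPred_forall]
  exact isClosed_iInter fun i => isClosed_le (by fun_prop) (by fun_prop)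

lemma scale_step (k : ℕ) {s : ℝ} (hs : 0 < s) (hs1 : s ≤ 1) :
    ∫⁻ v in {v : Fin (k+1) → ℝ | ∀ j, v j ≤ s}, hh v ∂(Measure.pi fun _ : Fin (k+1) => muI) =
    ENNReal.ofReal (s ^ (2*k+3)) * ∫⁻ v, hh v ∂(Measure.pi fun _ : Fin (k+1) => muI) := by
  rw [muI_pi, Measure.restrict_restrict (box_meas s)]
  have hset : {v : Fin (k+1) → ℝ | ∀ j, v j ≤ s} ∩ (Set.pi Set.univ fun _ => Set.Icc (0:ℝ) 1) =
      Set.pi Set.univ fun _ => Set.Icc (0:ℝ) s := by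
    ext v
    simp only [Set.mem_inter_iff, Set.mem_ofPred_eq, Set.mem_pi, Set.mem_univ, true_imp_iff,
      Set.mem_Icc]
    exact ⟨fun h j => ⟨(h.2 j).1, h.1 j⟩, fun h => ⟨fun j => (h j).2, fun j =>
      ⟨(h j).1, (h j).2.trans hs1⟩⟩⟩
  rw [hset, ← lintegral_indicator (cube_meas s), ← lintegral_indicator (cube_meas 1)]
  have hmap := Measure.map_addHaar_smul (volume : Measure (Fin (k+1) → ℝ)) hs.ne'
  have hfm : Measurable ((Set.pi Set.univ fun _ : Fin (k+1) => Set.Icc (0:ℝ) s).indicator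
      (hh (k := k))) := hh_meas.indicator (cube_meas s)
  have h1 := lintegral_map (μ := volume) hfm
    (measurable_const_smul s : Measurable fun x : Fin (k+1) → ℝ => s • x)
  rw [hmap, lintegral_smul_measure] at h1
  have h2 : ∀ x : Fin (k+1) → ℝ, (Set.pi Set.univ fun _ : Fin (k+1) => Set.Icc (0:ℝ) s).indicator
      (hh (k := k)) (s • x) = ENNReal.ofReal (s ^ (k+2)) *
      (Set.pi Set.univ fun _ : Fin (k+1) => Set.Icc (0:ℝ) 1).indicator (hh (k := k)) x := by
    intro x
    have : s • x ∈ (Set.pi Set.univ fun _ : Fin (k+1) => Set.Icc (0:ℝ) s) ↔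
        x ∈ (Set.pi Set.univ fun _ : Fin (k+1) => Set.Icc (0:ℝ) 1) := by
      simp only [Set.mem_pi, Set.mem_univ, true_imp_iff, Set.mem_Icc, Pi.smul_apply, smul_eq_mul]
      refine forall_congr' fun j => ?_
      rw [mul_nonneg_iff_of_pos_left hs, mul_le_iff_le_one_right hs]
    by_cases hx : x ∈ (Set.pi Set.univ fun _ : Fin (k+1) => Set.Icc (0:ℝ) 1)
    · rw [Set.indicator_of_mem hx, Set.indicator_of_mem (this.mpr hx), hh_smul hs.le]
    · rw [Set.indicator_of_notMem hx, Set.indicator_of_notMem (fun h => hx (this.mp h)), mul_zero]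
  simp only [h2] at h1
  rw [lintegral_const_mul _ (hh_meas.indicator (cube_meas 1))] at h1
  have h3 : ENNReal.ofReal (s ^ (2*k+3)) =
      ENNReal.ofReal (s^(k+1)) * ENNReal.ofReal (s^(k+2)) := by
    rw [← ENNReal.ofReal_mul (by positivity)]; congr 1; ring
  rw [h3, mul_assoc, ← h1, smul_eq_mul, ← mul_assoc, ← ENNReal.ofReal_mul (by positivity)]
  have h4 : s ^ (k+1) * |(s ^ Module.finrank ℝ (Fin (k+1) → ℝ))⁻¹| = 1 := by
    rw [Module.finrank_fin_fun, abs_of_pos (by positivity)]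
    exact mul_inv_cancel₀ (by positivity)
  rw [h4, ENNReal.ofReal_one, one_mul]

lemma pow_int (n : ℕ) : ∫⁻ s, ENNReal.ofReal (s ^ n) ∂muI = ENNReal.ofReal (1 / (n + 1)) := by
  unfold muI
  rw [← ofReal_integral_eq_lintegral_ofReal]
  · rw [integral_Icc_eq_integral_Ioc, ← intervalIntegral.integral_of_le zero_le_one, integral_pow]
    simp
  · exact (continuous_pow n).continuousOn.integrableOn_compact isCompact_Icc
  · filter_upwards [ae_restrict_mem measurableSet_Icc] with s hs
    exact pow_nonneg hs.1 n

/-- Region where coordinate `i` is maximal. -/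
def MX {k : ℕ} (i : Fin (k+2)) : Set (Fin (k+2) → ℝ) := {u | ∀ j, u j ≤ u i}

lemma MX_meas {k : ℕ} (i : Fin (k+2)) : MeasurableSet (MX i) := by
  apply IsClosed.measurableSet
  simp only [MX, Set.ofPred_forall]
  exact isClosed_iInter fun i => isClosed_le (by fun_prop) (by fun_prop)

lemma cp_cons {k : ℕ} (u : Fin (k+2) → ℝ) (hu : u ∈ MX 0) : cp u = hh (Fin.tail u) := by
  unfold cp hh pp
  rw [Fin.prod_univ_castSucc, Fin.prod_univ_succ]
  simp only [Fin.coeSucc_eq_succ, Fin.last_add_one, Fin.tail, Fin.castSucc_zero]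
  rw [min_eq_right (hu _), min_eq_left (hu _), mul_assoc]
  rfl

lemma max0 (k : ℕ) : ∫⁻ u in MX 0, cp u ∂(Measure.pi fun _ : Fin (k+2) => muI) =
    ENNReal.ofReal (1 / (2*k+4)) * ∫⁻ v, hh v ∂(Measure.pi fun _ : Fin (k+1) => muI) := by
  let T : Set (ℝ × (Fin (k+1) → ℝ)) := {p | ∀ j, p.2 j ≤ p.1}
  have hT : MeasurableSet T := by
    apply IsClosed.measurableSet
    simp only [T, Set.ofPred_forall]
    exact isClosed_iInter fun i => isClosed_le (by fun_prop) (by fun_prop)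
  have hm : Measurable (T.indicator fun p => hh p.2) :=
    (hh_meas.comp measurable_snd).indicator hT
  have mp := measurePreserving_piFinSuccAbove (fun _ : Fin (k+2) => muI) 0
  have e1 : ∫⁻ u in MX 0, cp u ∂(Measure.pi fun _ : Fin (k+2) => muI) =
      ∫⁻ p, T.indicator (fun p => hh p.2) p
        ∂(muI.prod (Measure.pi fun _ : Fin (k+1) => muI)) := by
    rw [← mp.lintegral_comp hm, ← lintegral_indicator (MX_meas 0)]
    congr 1; ext u
    have hiff : MeasurableEquiv.piFinSuccAbove (fun _ => ℝ) 0 u ∈ T ↔ u ∈ MX 0 := by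
      simp only [T, MX, Set.mem_ofPred_eq]
      rw [Fin.forall_fin_succ (P := fun j => u j ≤ u 0)]
      simp [MeasurableEquiv.piFinSuccAbove, Fin.insertNthEquiv, Fin.removeNth, Fin.tail]
    by_cases hu : u ∈ MX 0
    · rw [Set.indicator_of_mem hu, Set.indicator_of_mem (hiff.mpr hu), cp_cons u hu]
      rfl
    · rw [Set.indicator_of_notMem hu, Set.indicator_of_notMem (fun h => hu (hiff.mp h))]
  rw [e1, lintegral_prod _ hm.aemeasurable]
  have e2 : (2 * (k:ℝ) + 4) = ((2*k+3 : ℕ) : ℝ) + 1 := by push_cast; ring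
  rw [e2, ← pow_int, ← lintegral_mul_const _ (by fun_prop)]
  apply lintegral_congr_ae
  have hpos : ∀ᵐ s ∂muI, 0 < s ∧ s ≤ 1 := by
    unfold muI
    rw [← restrict_Ioc_eq_restrict_Icc]
    exact ae_restrict_mem measurableSet_Ioc
  filter_upwards [hpos] with s hs
  rw [← scale_step k hs.1 hs.2, ← lintegral_indicator (box_meas s)]
  rfl

lemma maxi (k : ℕ) (i : Fin (k+2)) : ∫⁻ u in MX i, cp u ∂(Measure.pi fun _ : Fin (k+2) => muI) =
    ∫⁻ u in MX 0, cp u ∂(Measure.pi fun _ : Fin (k+2) => muI) := by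
  have mp := measurePreserving_piCongrLeft (fun _ : Fin (k+2) => muI) (Equiv.addRight i)
  have hg : ∀ (u : Fin (k+2) → ℝ) j,
      MeasurableEquiv.piCongrLeft (fun _ => ℝ) (Equiv.addRight i) u (j + i) = u j := by
    intro u j
    exact MeasurableEquiv.piCongrLeft_apply_apply (β := fun _ => ℝ) (Equiv.addRight i) u j
  rw [← mp.setLIntegral_comp_preimage_emb (MeasurableEquiv.measurableEmbedding _)]
  have hs : (MeasurableEquiv.piCongrLeft (fun _ => ℝ) (Equiv.addRight i)) ⁻¹' MX i = MX 0 := by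
    ext u
    simp only [MX, Set.mem_preimage, Set.mem_ofPred_eq]
    rw [← (Equiv.addRight i).forall_congr_right]
    have h0 := hg u 0
    rw [zero_add] at h0
    simp only [Equiv.coe_addRight, hg, h0]
  rw [hs]
  congr 1; ext u
  unfold cp
  rw [← Equiv.prod_comp (Equiv.addRight i)]
  refine Finset.prod_congr rfl fun j _ => ?_
  have h1 : j + i + 1 = (j + 1) + i := by abel
  rw [Equiv.coe_addRight, h1, hg, hg]

lemma max_step (k : ℕ) : ∫⁻ u, cp u ∂(Measure.pi fun _ : Fin (k+2) => muI) =
    ENNReal.ofReal (1/2) * ∫⁻ v, hh v ∂(Measure.pi fun _ : Fin (k+1) => muI) := by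
  have hU : (⋃ i : Fin (k+2), MX i) = Set.univ := by
    ext u
    simp only [Set.mem_iUnion, Set.mem_univ, iff_true]
    exact Finite.exists_max u
  have hD : Pairwise (Function.onFun (AEDisjoint (Measure.pi fun _ : Fin (k+2) => muI))
      (MX (k := k))) := by
    intro i j hij
    have hz : volume {u : Fin (k+2) → ℝ | u i = u j} = 0 := by
      let W : Submodule ℝ (Fin (k+2) → ℝ) :=
        LinearMap.ker ((LinearMap.proj i : (Fin (k+2) → ℝ) →ₗ[ℝ] ℝ) - LinearMap.proj j)
      have hW : W ≠ ⊤ := by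
        intro h
        have : (Pi.single i 1 : Fin (k+2) → ℝ) ∈ W := by rw [h]; trivial
        simp [W, hij.symm] at this
      have := Measure.addHaar_submodule volume W hW
      refine measure_mono_null ?_ this
      intro u hu
      simp only [W, SetLike.mem_coe, LinearMap.mem_ker, LinearMap.sub_apply, LinearMap.proj_apply]
      exact sub_eq_zero.mpr hu
    change (Measure.pi fun _ : Fin (k+2) => muI) (MX i ∩ MX j) = 0
    rw [muI_pi]
    refine Measure.absolutelyContinuous_of_le Measure.restrict_le_self ?_
    refine measure_mono_null ?_ hz
    intro u hu
    exact le_antisymm (hu.2 i) (hu.1 j)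
  rw [← setLIntegral_univ, ← hU, lintegral_iUnion₀ (fun i => (MX_meas i).nullMeasurableSet) hD]
  simp only [maxi, max0]
  rw [tsum_fintype, Finset.sum_const, Finset.card_univ, Fintype.card_fin, nsmul_eq_mul,
    ← mul_assoc, ← ENNReal.ofReal_natCast, ← ENNReal.ofReal_mul (by positivity)]
  congr 2
  push_cast
  field_simp
  ring

/-- `vol Q(C_m) = vol Q(P_{m-1}) / 4`. -/
theorem volume_QSet_cycle_eq_quarter_path (m : ℕ) (hm : 3 ≤ m) :
    volume (QSet (cycleG m)) = volume (QSet (pathG (m - 1))) / 4 := by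
  obtain ⟨k, rfl⟩ : ∃ k, m = k + 1 + 1 := ⟨m - 2, by omega⟩
  rw [vol_cycle (k+1) (by omega)]
  change _ = volume (QSet (pathG (k + 1))) / 4
  rw [vol_path (k+1), max_step, dual_step]
  have h4 : (4 : ENNReal)⁻¹ = ENNReal.ofReal (1/2) * ENNReal.ofReal (1/2) := by
    rw [← ENNReal.ofReal_mul (by norm_num)]
    have : (4 : ENNReal) = ENNReal.ofReal 4 := by simp
    rw [this, ← ENNReal.ofReal_inv_of_pos (by norm_num)]
    congr 1; norm_num
  rw [ENNReal.div_eq_inv_mul, h4]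
  ring
end
end

section
/- Let m >= 3 and let A be an odd-cardinality subset of the edge set of the cycle C_m. Then (a) every point of the boolean quadric polytope P(C_m) satisfies the odd cycle inequality OC(A); and (b) the point v^0 defined by x_i = 1/2 for every vertex i, y_{ij} = 1/2 for every edge (i,j) not in A, and y_{ij} = 0 for every edge (i,j) in A, belongs to Q(C_m) but violates OC(A). -/
open MeasureTheory Filter

noncomputable section

/-- The boolean quadric polytope `P(G)` of a graph `G`: the convex hull of the 0/1
points with `y_{ij} = x_i * x_j` for every edge `(i,j)`. -/
def BQPSet {V : Type*} (G : SimpleGraph V) : Set ((V → ℝ) × (↥G.edgeSet → ℝ)) :=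
  convexHull ℝ {p | (∀ i, p.1 i = 0 ∨ p.1 i = 1) ∧
    ∀ (i j : V) (h : G.Adj i j),
      p.2 ⟨s(i, j), (SimpleGraph.mem_edgeSet _).mpr h⟩ = p.1 i * p.1 j}

/-- The odd cycle inequality `OC(A)` for the cycle graph `C_m` and a subset `A` of its
edges: `∑_{i ∈ S₂} x_i - ∑_{i ∈ S₀} x_i + ∑_{e ∉ A} y_e - ∑_{e ∈ A} y_e ≤ ⌊|A|/2⌋`,
where `S₂` (resp. `S₀`) is the set of vertices incident to exactly two (resp. zero)
edges of `A`. -/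
def OC {m : ℕ} (A : Finset (cycleG m).edgeSet)
    (p : (Fin m → ℝ) × (↥(cycleG m).edgeSet → ℝ)) : Prop :=
  (∑ i ∈ Finset.univ.filter
      (fun i : Fin m =>
        (A.filter fun e : (cycleG m).edgeSet => i ∈ (e : Sym2 (Fin m))).card = 2), p.1 i)
  - (∑ i ∈ Finset.univ.filter
      (fun i : Fin m =>
        (A.filter fun e : (cycleG m).edgeSet => i ∈ (e : Sym2 (Fin m))).card = 0), p.1 i)
  + (∑ e ∈ Aᶜ, p.2 e) - (∑ e ∈ A, p.2 e) ≤ ((A.card / 2 : ℕ) : ℝ)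

open Finset in
lemma cycleG_deg (m : ℕ) (hm : 3 ≤ m) (i : Fin m) :
    (univ.filter fun e : (cycleG m).edgeSet => i ∈ (e : Sym2 (Fin m))).card = 2 := by
  obtain ⟨n, rfl⟩ : ∃ n, m = n + 3 := ⟨m - 3, by omega⟩
  have hG : cycleG (n + 3) = SimpleGraph.cycleGraph (n + 3) := by
    ext i j
    rw [SimpleGraph.cycleGraph_adj]
    simp only [cycleG, SimpleGraph.fromRel_adj]
    have key : ∀ a b : Fin (n + 3), ((a : ℕ) + 1) % (n + 3) = (b : ℕ) ↔ b - a = 1 := by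
      intro a b
      rw [sub_eq_iff_eq_add, Fin.ext_iff, Fin.val_add, Fin.val_one, add_comm 1]
      exact eq_comm
    rw [key, key]
    constructor
    · rintro ⟨_, h⟩
      exact h.symm
    · intro h
      refine ⟨?_, h.symm⟩
      rintro rfl
      simp at h
  have hd : (cycleG (n + 3)).degree i = 2 := by
    have := SimpleGraph.cycleGraph_degree_three_le (n := n) (v := i)
    rw [← this]
    congr!
  rw [← hd, ← SimpleGraph.card_incidenceFinset_eq_degree]
  rw [← Finset.card_map (Function.Embedding.subtype _)]
  congr 1
  ext e
  simp [SimpleGraph.mem_incidenceFinset, SimpleGraph.incidenceSet, and_comm]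

/-- Left-hand side of the odd cycle inequality. -/
def ocL {m : ℕ} (A : Finset (cycleG m).edgeSet)
    (p : (Fin m → ℝ) × (↥(cycleG m).edgeSet → ℝ)) : ℝ :=
  (∑ i ∈ Finset.univ.filter
      (fun i : Fin m =>
        (A.filter fun e : (cycleG m).edgeSet => i ∈ (e : Sym2 (Fin m))).card = 2), p.1 i)
  - (∑ i ∈ Finset.univ.filter
      (fun i : Fin m =>
        (A.filter fun e : (cycleG m).edgeSet => i ∈ (e : Sym2 (Fin m))).card = 0), p.1 i)
  + (∑ e ∈ Aᶜ, p.2 e) - (∑ e ∈ A, p.2 e)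

lemma ocL_linear {m : ℕ} (A : Finset (cycleG m).edgeSet) : IsLinearMap ℝ (ocL A) := by
  constructor
  · intro p q
    simp only [ocL, Prod.fst_add, Prod.snd_add, Pi.add_apply, Finset.sum_add_distrib]
    ring
  · intro c p
    simp only [ocL, Prod.smul_fst, Prod.smul_snd, Pi.smul_apply, smul_eq_mul, ← Finset.mul_sum]
    ring

open Finset in
lemma two_ocL {m : ℕ} (hm : 3 ≤ m) (A : Finset (cycleG m).edgeSet)
    (p : (Fin m → ℝ) × (↥(cycleG m).edgeSet → ℝ)) :
    2 * ocL A p = ∑ e, (if e ∈ A then (1 : ℝ) else -1) *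
      ((∑ i, if i ∈ (e : Sym2 (Fin m)) then p.1 i else 0) - 2 * p.2 e) := by
  have h1 : ∀ i : Fin m,
      2 * ((if (A.filter fun e : (cycleG m).edgeSet => i ∈ (e : Sym2 (Fin m))).card = 2
        then p.1 i else 0) -
      (if (A.filter fun e : (cycleG m).edgeSet => i ∈ (e : Sym2 (Fin m))).card = 0
        then p.1 i else 0)) =
      ∑ e, (if e ∈ A then (1 : ℝ) else -1) *
        (if i ∈ (e : Sym2 (Fin m)) then p.1 i else 0) := by
    intro i
    have hd := cycleG_deg m hm i
    have hle : (A.filter fun e : (cycleG m).edgeSet => i ∈ (e : Sym2 (Fin m))).card ≤ 2 := by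
      rw [← hd]
      exact card_le_card (filter_subset_filter _ (subset_univ _))
    have e1 : ∑ e, (if e ∈ A then (1 : ℝ) else -1) *
        (if i ∈ (e : Sym2 (Fin m)) then p.1 i else 0) =
        (2 * ((A.filter fun e : (cycleG m).edgeSet => i ∈ (e : Sym2 (Fin m))).card : ℝ)
          - ((univ.filter fun e : (cycleG m).edgeSet => i ∈ (e : Sym2 (Fin m))).card : ℝ))
          * p.1 i := by
      have hA : (A.filter fun e : (cycleG m).edgeSet => i ∈ (e : Sym2 (Fin m))) =
        univ.filter fun e : (cycleG m).edgeSet => e ∈ A ∧ i ∈ (e : Sym2 (Fin m)) := by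
        ext e; simp
      rw [hA, card_filter, card_filter]
      push_cast
      rw [mul_sum, ← sum_sub_distrib, sum_mul]
      refine sum_congr rfl fun e _ => ?_
      by_cases h1 : e ∈ A <;> by_cases h2 : i ∈ (e : Sym2 (Fin m)) <;> simp [h1, h2] <;> ring
    rw [e1, hd]
    generalize (A.filter fun e : (cycleG m).edgeSet => i ∈ (e : Sym2 (Fin m))).card = k at hle
    interval_cases k <;> norm_num
  have h2 : ∑ e ∈ Aᶜ, p.2 e - ∑ e ∈ A, p.2 e =
      ∑ e, -((if e ∈ A then (1 : ℝ) else -1) * p.2 e) := by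
    rw [← sum_add_sum_compl A, add_comm, sub_eq_add_neg, ← sum_neg_distrib]
    congr 1
    · refine sum_congr rfl fun e he => ?_
      rw [mem_compl] at he
      simp [he]
    · refine sum_congr rfl fun e he => ?_
      simp [he]
  have h3 : ocL A p = ∑ i : Fin m,
      ((if (A.filter fun e : (cycleG m).edgeSet => i ∈ (e : Sym2 (Fin m))).card = 2
        then p.1 i else 0) -
      (if (A.filter fun e : (cycleG m).edgeSet => i ∈ (e : Sym2 (Fin m))).card = 0
        then p.1 i else 0)) + (∑ e ∈ Aᶜ, p.2 e - ∑ e ∈ A, p.2 e) := by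
    rw [ocL, sum_filter, sum_filter, sum_sub_distrib]
    ring
  rw [h3, h2, mul_add, mul_sum, sum_congr rfl fun i _ => h1 i, sum_comm, mul_sum,
    ← sum_add_distrib]
  refine sum_congr rfl fun e _ => ?_
  rw [← mul_sum]
  ring

open Finset in
lemma edge_sum {m : ℕ} (x : Fin m → ℝ) {i j : Fin m} (h : i ≠ j) :
    (∑ k, if k ∈ s(i, j) then x k else 0) = x i + x j := by
  rw [← sum_filter, ← sum_pair h]
  congr 1
  ext k
  simp

/-- For an odd subset `A` of the edges of `C_m`: (a) the odd cycle inequality `OC(A)`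
is valid for `P(C_m)`; (b) the point `v⁰` with all `x`-coordinates `1/2`,
`y_e = 1/2` off `A` and `y_e = 0` on `A` lies in `Q(C_m)` but violates `OC(A)`. -/
theorem oddCycle_valid_and_cuts (m : ℕ) (hm : 3 ≤ m)
    (A : Finset (cycleG m).edgeSet) (hA : Odd A.card) :
    (∀ p ∈ BQPSet (cycleG m), OC A p) ∧
    (((fun _ : Fin m => (1 / 2 : ℝ)), (fun e : (cycleG m).edgeSet =>
        if e ∈ A then (0 : ℝ) else 1 / 2)) ∈ QSet (cycleG m) ∧
      ¬ OC A ((fun _ : Fin m => (1 / 2 : ℝ)), (fun e : (cycleG m).edgeSet =>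
        if e ∈ A then (0 : ℝ) else 1 / 2))) := by
  have hOC : ∀ p, OC A p ↔ ocL A p ≤ ((A.card / 2 : ℕ) : ℝ) := fun p => Iff.rfl
  have hcard : ∑ e, (if e ∈ A then (1 : ℝ) else 0) = A.card := by simp
  refine ⟨?_, ?_, ?_⟩
  · have hsub : BQPSet (cycleG m) ⊆ {p | ocL A p ≤ ((A.card / 2 : ℕ) : ℝ)} := by
      refine convexHull_min ?_ (convex_halfSpace_le (ocL_linear A) _)
      rintro p ⟨hx, hy⟩
      have hyi : ∀ e, ∃ z : ℤ, p.2 e = z := by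
        rintro ⟨e, he⟩
        induction e using Sym2.ind with
        | _ i j =>
          rw [hy i j he]
          rcases hx i with h | h <;> rcases hx j with h' | h' <;> rw [h, h']
          · exact ⟨0, by simp⟩
          · exact ⟨0, by simp⟩
          · exact ⟨0, by simp⟩
          · exact ⟨1, by simp⟩
      have hxi : ∀ i, ∃ z : ℤ, p.1 i = z := by
        intro i
        rcases hx i with h | h
        · exact ⟨0, by simp [h]⟩
        · exact ⟨1, by simp [h]⟩
      choose zx hzx using hxi
      choose zy hzy using hyi
      have hint : ∃ N : ℤ, ocL A p = N := by
        unfold ocL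
        simp only [hzx, hzy]
        simp only [← Int.cast_sum, ← Int.cast_sub, ← Int.cast_add]
        exact ⟨_, rfl⟩
      have hle : 2 * ocL A p ≤ A.card := by
        rw [two_ocL hm, ← hcard]
        refine Finset.sum_le_sum ?_
        rintro ⟨e, he⟩ _
        induction e using Sym2.ind with
        | _ i j =>
          rw [edge_sum p.1 (SimpleGraph.Adj.ne ((SimpleGraph.mem_edgeSet _).mp he)), hy i j he]
          split_ifs <;> rcases hx i with h | h <;> rcases hx j with h' | h' <;>
            rw [h, h'] <;> norm_num
      obtain ⟨N, hN⟩ := hint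
      show ocL A p ≤ _
      rw [hN] at hle ⊢
      have : 2 * N ≤ (A.card : ℤ) := by exact_mod_cast hle
      have h' : N ≤ ((A.card / 2 : ℕ) : ℤ) := by omega
      have h'' : (N : ℝ) ≤ (((A.card / 2 : ℕ) : ℤ) : ℝ) := Int.cast_le.mpr h'
      rwa [Int.cast_natCast] at h''
    exact fun p hp => hsub hp
  · refine ⟨fun i => ?_, fun e => ?_, fun i j h => ?_⟩
    · constructor <;> norm_num
    · dsimp only
      split_ifs <;> constructor <;> norm_num
    · dsimp only
      split_ifs <;> norm_num
  · rw [hOC, not_le]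
    have h2 : 2 * ocL A ((fun _ : Fin m => (1 / 2 : ℝ)), (fun e : (cycleG m).edgeSet =>
        if e ∈ A then (0 : ℝ) else 1 / 2)) = A.card := by
      rw [two_ocL hm, ← hcard]
      refine Finset.sum_congr rfl ?_
      rintro ⟨e, he⟩ _
      induction e using Sym2.ind with
      | _ i j =>
        dsimp only
        rw [edge_sum (fun _ => (1 / 2 : ℝ)) (SimpleGraph.Adj.ne ((SimpleGraph.mem_edgeSet _).mp he))]
        split_ifs <;> norm_num
    obtain ⟨k, hk⟩ := hA
    have h3 : A.card / 2 = k := by omega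
    rw [h3]
    rw [hk] at h2
    push_cast at h2
    linarith
end
end

section
/- Let G be a finite simple graph containing a simple cycle C, and let A and B be two distinct odd-cardinality subsets of the edge set of C. Then no point of Q(G) violates both the odd cycle inequality OC(A) and the odd cycle inequality OC(B); i.e., the portions of Q(G) removed by OC(A) and by OC(B) are disjoint. -/
open MeasureTheory Filter

noncomputable section

/-- The odd cycle inequality `OC(A)` associated to a closed walk `c` in `G` and a
subset `A` of the edges of `c`:
`∑_{i ∈ S₂} x_i - ∑_{i ∈ S₀} x_i + ∑_{e ∈ E(C)\A} y_e - ∑_{e ∈ A} y_e ≤ ⌊|A|/2⌋`,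
where `S₂` (resp. `S₀`) is the set of vertices of `c` incident to exactly two
(resp. zero) edges of `A`. -/
def OCW {V : Type*} [Fintype V] [DecidableEq V] (G : SimpleGraph V) [DecidableRel G.Adj]
    {u : V} (c : G.Walk u u) (A : Finset G.edgeSet)
    (p : (V → ℝ) × (↥G.edgeSet → ℝ)) : Prop :=
  (∑ i ∈ Finset.univ.filter (fun i : V => i ∈ c.support ∧
      (A.filter fun e : G.edgeSet => i ∈ (e : Sym2 V)).card = 2), p.1 i)
  - (∑ i ∈ Finset.univ.filter (fun i : V => i ∈ c.support ∧
      (A.filter fun e : G.edgeSet => i ∈ (e : Sym2 V)).card = 0), p.1 i)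
  + (∑ e ∈ Finset.univ.filter
      (fun e : G.edgeSet => (e : Sym2 V) ∈ c.edges ∧ e ∉ A), p.2 e)
  - (∑ e ∈ A, p.2 e) ≤ ((A.card / 2 : ℕ) : ℝ)

/-- Every vertex of a cycle is incident to exactly two of its edges. -/
theorem cycle_deg_two {V : Type} [Fintype V] [DecidableEq V]
    (G : SimpleGraph V) [DecidableRel G.Adj] {u : V}
    (c : G.Walk u u) (hc : c.IsCycle) (i : V) (hi : i ∈ c.support) :
    ((Finset.univ.filter (fun e : G.edgeSet => (e : Sym2 V) ∈ c.edges)).filter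
      (fun e : G.edgeSet => i ∈ (e : Sym2 V))).card = 2 := by
  rw [← hc.ncard_neighborSet_toSubgraph_eq_two hi, ← Set.ncard_coe_finset]
  symm
  have key : ∀ w, w ∈ c.toSubgraph.neighborSet i → s(i, w) ∈ c.edges := by
    intro w hw
    exact c.adj_toSubgraph_iff_mem_edges.mp hw
  refine Set.ncard_congr (fun w hw => (⟨s(i, w), c.edges_subset_edgeSet (key w hw)⟩ : G.edgeSet))
    ?_ ?_ ?_
  · intro w hw
    simpa using key w hw
  · intro a b ha hb h
    exact Sym2.congr_right.mp (Subtype.ext_iff.mp h)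
  · rintro ⟨e, he⟩ h
    simp only [Finset.coe_filter, Finset.mem_filter, Finset.mem_univ, true_and,
      Set.mem_ofPred_eq] at h
    obtain ⟨h1, h2⟩ := h
    obtain ⟨w, rfl⟩ := Sym2.mem_iff_exists.mp h2
    exact ⟨w, c.adj_toSubgraph_iff_mem_edges.mpr h1, rfl⟩

/-- Double counting of endpoints. -/
theorem sum_endpoints {V : Type} [Fintype V] [DecidableEq V]
    (G : SimpleGraph V) (x : V → ℝ) (A : Finset G.edgeSet) :
    ∑ e ∈ A, ∑ i ∈ Finset.univ.filter (fun i => i ∈ (e : Sym2 V)), x i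
      = ∑ i, ((A.filter fun e : G.edgeSet => i ∈ (e : Sym2 V)).card : ℝ) * x i := by
  simp only [Finset.sum_filter]
  rw [Finset.sum_comm]
  refine Finset.sum_congr rfl fun i _ => ?_
  rw [← Finset.sum_filter, Finset.sum_const, nsmul_eq_mul]

/-- The cut value `x_i + x_j - 2 y_{ij}` of an edge. -/
def cutVal {V : Type} [Fintype V] [DecidableEq V]
    (G : SimpleGraph V) (p : (V → ℝ) × (↥G.edgeSet → ℝ)) (e : G.edgeSet) : ℝ :=
  (∑ i ∈ Finset.univ.filter (fun i => i ∈ (e : Sym2 V)), p.1 i) - 2 * p.2 e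

theorem cutVal_mem {V : Type} [Fintype V] [DecidableEq V]
    (G : SimpleGraph V) (p : (V → ℝ) × (↥G.edgeSet → ℝ)) (hp : p ∈ QSet G) (e : G.edgeSet) :
    0 ≤ cutVal G p e ∧ cutVal G p e ≤ 1 := by
  obtain ⟨e, he⟩ := e
  induction e using Sym2.ind with
  | _ i j =>
    have hadj : G.Adj i j := he
    obtain ⟨h1, h2, h3, h4⟩ := hp.2.2 i j hadj
    have hs : (Finset.univ.filter (fun k => k ∈ s(i, j))) = {i, j} := by
      ext k; simp
    unfold cutVal
    simp only [hs, Finset.sum_pair hadj.ne]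
    constructor <;> linarith

theorem viol {V : Type} [Fintype V] [DecidableEq V]
    (G : SimpleGraph V) [DecidableRel G.Adj] {u : V}
    (c : G.Walk u u) (hc : c.IsCycle) (A : Finset G.edgeSet)
    (hAc : ∀ e ∈ A, (e : Sym2 V) ∈ c.edges) (hA : Odd A.card)
    (p : (V → ℝ) × (↥G.edgeSet → ℝ)) (h : ¬ OCW G c A p) :
    ∑ e ∈ Finset.univ.filter (fun e : G.edgeSet => (e : Sym2 V) ∈ c.edges),
      (if e ∈ A then 1 - cutVal G p e else cutVal G p e) < 1 := by
  set E := Finset.univ.filter (fun e : G.edgeSet => (e : Sym2 V) ∈ c.edges) with hE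
  set N := Finset.univ.filter (fun e : G.edgeSet => (e : Sym2 V) ∈ c.edges ∧ e ∉ A) with hN
  have hEA : E.filter (fun e => e ∈ A) = A := by
    ext e; simp only [hE, Finset.mem_filter, Finset.mem_univ, true_and]
    exact ⟨fun h => h.2, fun h => ⟨hAc e h, h⟩⟩
  have hEN : E.filter (fun e => e ∉ A) = N := by
    rw [hE, hN, Finset.filter_filter]
  rw [Finset.sum_ite, hEA, hEN, Finset.sum_sub_distrib]
  unfold cutVal
  rw [Finset.sum_sub_distrib, Finset.sum_sub_distrib, sum_endpoints, sum_endpoints,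
    ← Finset.mul_sum, ← Finset.mul_sum]
  unfold OCW at h
  rw [← hN] at h
  push Not at h
  obtain ⟨k, hk⟩ := hA
  have hk2 : A.card / 2 = k := by omega
  rw [hk2] at h
  have key : (∑ i, ((A.filter fun e : G.edgeSet => i ∈ (e : Sym2 V)).card : ℝ) * p.1 i)
      - (∑ i, ((N.filter fun e : G.edgeSet => i ∈ (e : Sym2 V)).card : ℝ) * p.1 i)
      = 2 * (∑ i ∈ Finset.univ.filter (fun i : V => i ∈ c.support ∧
      (A.filter fun e : G.edgeSet => i ∈ (e : Sym2 V)).card = 2), p.1 i)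
      - 2 * (∑ i ∈ Finset.univ.filter (fun i : V => i ∈ c.support ∧
      (A.filter fun e : G.edgeSet => i ∈ (e : Sym2 V)).card = 0), p.1 i) := by
    rw [Finset.sum_filter, Finset.sum_filter, Finset.mul_sum, Finset.mul_sum,
      ← Finset.sum_sub_distrib, ← Finset.sum_sub_distrib]
    refine Finset.sum_congr rfl fun i _ => ?_
    have hadd : (A.filter fun e : G.edgeSet => i ∈ (e : Sym2 V)).card
        + (N.filter fun e : G.edgeSet => i ∈ (e : Sym2 V)).card
        = (E.filter fun e : G.edgeSet => i ∈ (e : Sym2 V)).card := by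
      rw [← Finset.card_filter_add_card_filter_not
        (s := E.filter fun e : G.edgeSet => i ∈ (e : Sym2 V)) (fun e => e ∈ A),
        Finset.filter_comm (fun e : G.edgeSet => i ∈ (e : Sym2 V)) (fun e => e ∈ A) E, hEA,
        Finset.filter_comm (fun e : G.edgeSet => i ∈ (e : Sym2 V)) (fun e => e ∉ A) E, hEN]
    by_cases hi : i ∈ c.support
    · rw [hE, cycle_deg_two G c hc i hi] at hadd
      generalize (A.filter fun e : G.edgeSet => i ∈ (e : Sym2 V)).card = a at *
      generalize (N.filter fun e : G.edgeSet => i ∈ (e : Sym2 V)).card = b at *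
      have ha : a ≤ 2 := by omega
      interval_cases a
      · obtain rfl : b = 2 := by omega
        simp [hi]
      · obtain rfl : b = 1 := by omega
        simp
      · obtain rfl : b = 0 := by omega
        simp [hi]
    · have h0 : (E.filter fun e : G.edgeSet => i ∈ (e : Sym2 V)).card = 0 := by
        rw [Finset.card_eq_zero, Finset.filter_eq_empty_iff]
        rintro ⟨e, he⟩ h1 h2
        simp only [hE, Finset.mem_filter, Finset.mem_univ, true_and] at h1
        obtain ⟨w, rfl⟩ := Sym2.mem_iff_exists.mp h2
        exact hi (c.fst_mem_support_of_mem_edges h1)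
      have ha : (A.filter fun e : G.edgeSet => i ∈ (e : Sym2 V)).card = 0 := by omega
      have hb : (N.filter fun e : G.edgeSet => i ∈ (e : Sym2 V)).card = 0 := by omega
      rw [ha, hb]
      simp [hi]
  simp only [Finset.sum_const, nsmul_eq_mul, mul_one, hk]
  push_cast
  linarith

/-- Distinct odd cycle inequalities coming from a single simple cycle of `G` cut off
disjoint parts of `Q(G)`: no point of `Q(G)` violates both. -/
theorem oddCycle_ineqs_disjoint {V : Type} [Fintype V] [DecidableEq V]
    (G : SimpleGraph V) [DecidableRel G.Adj] {u : V}
    (c : G.Walk u u) (hc : c.IsCycle)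
    (A B : Finset G.edgeSet)
    (hAc : ∀ e ∈ A, (e : Sym2 V) ∈ c.edges) (hBc : ∀ e ∈ B, (e : Sym2 V) ∈ c.edges)
    (hA : Odd A.card) (hB : Odd B.card) (hAB : A ≠ B) :
    ∀ p ∈ QSet G, OCW G c A p ∨ OCW G c B p := by
  intro p hp
  by_contra hcon
  push Not at hcon
  have h1 := viol G c hc A hAc hA p hcon.1
  have h2 := viol G c hc B hBc hB p hcon.2
  set E := Finset.univ.filter (fun e : G.edgeSet => (e : Sym2 V) ∈ c.edges) with hE
  have hD : symmDiff A B ⊆ E := by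
    intro e he
    rw [Finset.mem_symmDiff] at he
    simp only [hE, Finset.mem_filter, Finset.mem_univ, true_and]
    rcases he with he | he
    · exact hAc e he.1
    · exact hBc e he.1
  have hcard : 2 ≤ (symmDiff A B).card := by
    have hne : (symmDiff A B).card ≠ 0 := by
      rw [Ne, Finset.card_eq_zero, ← Finset.bot_eq_empty, symmDiff_eq_bot]
      exact hAB
    have e1 : (symmDiff A B).card = (A \ B).card + (B \ A).card := by
      rw [symmDiff_def, Finset.sup_eq_union, Finset.card_union_of_disjoint disjoint_sdiff_sdiff]
    have e2 := Finset.card_sdiff_add_card_inter A B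
    have e3 := Finset.card_sdiff_add_card_inter B A
    rw [Finset.inter_comm] at e3
    obtain ⟨a, ha⟩ := hA
    obtain ⟨b, hb⟩ := hB
    omega
  have h3 : ((symmDiff A B).card : ℝ) ≤ ∑ e ∈ E,
      ((if e ∈ A then 1 - cutVal G p e else cutVal G p e)
      + (if e ∈ B then 1 - cutVal G p e else cutVal G p e)) := by
    calc ((symmDiff A B).card : ℝ) = ∑ e ∈ symmDiff A B, (1 : ℝ) := by simp
      _ ≤ ∑ e ∈ symmDiff A B, ((if e ∈ A then 1 - cutVal G p e else cutVal G p e)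
      + (if e ∈ B then 1 - cutVal G p e else cutVal G p e)) := by
        refine Finset.sum_le_sum fun e he => ?_
        rw [Finset.mem_symmDiff] at he
        rcases he with he | he <;> simp [he.1, he.2]
      _ ≤ _ := by
        refine Finset.sum_le_sum_of_subset_of_nonneg hD fun e _ _ => ?_
        obtain ⟨h5, h6⟩ := cutVal_mem G p hp e
        split_ifs <;> linarith
  rw [Finset.sum_add_distrib] at h3
  have h4 : (2 : ℝ) ≤ ((symmDiff A B).card : ℝ) := by exact_mod_cast hcard
  linarith
end
end
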